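/- There exist universal constants c > 0 and n₀ such that for all n ≥ n₀, r ≥ 1, integer 1 ≤ p ≤ n, and k with n·r ≤ k ≤ n²: if a randomized t-round adaptive algorithm making k exact linear measurements per round is such that for every n×n real matrix A it outputs a matrix B of rank at most r satisfying ‖A − B‖_{F_p} ≤ 2·min{‖A − X‖_{F_p} : rank(X) ≤ r} with probability at least 99/100 (over the seed), then t ≥ c·log(n²/k)/(log p + log log n). -/

import Mathlib

/-!
The hard inputs are `A = s u vᵀ + G` with uniform sign vectors `u`, `v` and a standard Gaussian
matrix `G`. With probability at least `9/10` one has `‖G‖ ≤ τ = √(40 n log n)`. Since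
`‖M‖ ≤ ‖M‖_{F_p} ≤ p ‖M‖`, a `2`-approximation of `A` in the Ky-Fan norm is then within `3 p τ` of
the plant `s u vᵀ` in spectral norm. The scale `s = 6 p τ / n` makes this half of
`‖s u vᵀ‖ = s n`, and a fixed matrix of rank at most `r` is that close to the plants of only a
fraction `exp (-(3n/16 - r/2))` of all sign pairs, so a successful algorithm has to identify the
plant to a large extent.

For a deterministic algorithm, the transcript on `b + G` has an explicit density with respect to
independent Gaussians: by rotation invariance the measured component of `G` can be resampled
independently of the rest, and Cameron–Martin handles the shift. The square of this density is the
density for `2 b` times `exp energy`, where the energy is the squared norm of the component of `b`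
captured by all queries. Truncating the density with the help of this second moment gives a
Fano-type bound: if each transcript is compatible with at most a fraction `exp (-D)` of the plants,
then a compatible plant together with energy at most `m` has probability at most
`2 exp ((m - D) / 2)` on average.

This bound is used twice. First, `k` orthonormal queries fixed in advance capture much more than
`k` units of the energy of `u ⊗ v` only for an exponentially small fraction of the sign pairs.
Hence the energy captured after one more round is with high probability at most the previous one
times `2 + 8 n s²`, which is of order `p² log n`. Second, after `t` rounds the total energy is too
small for the output to be close to the plant unless `(C p² log n) ^ (t + 1) k log n` exceeds `n²`
up to a constant. Averaging over the seed extends this to randomized algorithms, and taking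
logarithms gives the theorem.
-/

open MeasureTheory ProbabilityTheory Matrix
open scoped ENNReal Classical

noncomputable section

/-- Squared Euclidean norm of a finitely-indexed real vector. -/
def sqNorm {ι : Type*} [Fintype ι] (x : ι → ℝ) : ℝ := ∑ i, x i ^ 2

/-- Squared Frobenius norm of a real matrix. -/
def frobSq {m n : Type*} [Fintype m] [Fintype n] (A : Matrix m n ℝ) : ℝ :=
  ∑ i, ∑ j, A i j ^ 2

/-- Spectral (ℓ₂ operator) norm of a real matrix. -/
def specNorm {m n : Type*} [Fintype m] [Fintype n] (A : Matrix m n ℝ) : ℝ :=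
  sSup ((fun x : n → ℝ => Real.sqrt (sqNorm (A.mulVec x))) '' {x | sqNorm x ≤ 1})

/-- `i`-th largest singular value (1-based), characterized via
`σ_i(A) = min {‖A − X‖ : rank X ≤ i − 1}`. -/
def singVal {m n : Type*} [Fintype m] [Fintype n] (A : Matrix m n ℝ) (i : ℕ) : ℝ :=
  sInf {c | ∃ X : Matrix m n ℝ, X.rank ≤ i - 1 ∧ c = specNorm (A - X)}

/-- Flattening of an `n × n` matrix into a vector in `ℝ^{n²}`. -/
def vec (n : ℕ) (A : Matrix (Fin n) (Fin n) ℝ) : Fin (n * n) → ℝ :=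
  fun i => A (finProdFinEquiv.symm i).1 (finProdFinEquiv.symm i).2

/-- `u ⊗ v = vec (u vᵀ) ∈ ℝ^{n²}`. -/
def tensor {n : ℕ} (u v : Fin n → ℝ) : Fin (n * n) → ℝ :=
  vec n (Matrix.of fun i j => u i * v j)

/-- Standard Gaussian measure on `ι → ℝ`. -/
def stdGaussian (ι : Type*) [Fintype ι] : Measure (ι → ℝ) :=
  Measure.pi fun _ => gaussianReal 0 1

/-- Standard Gaussian measure on `n × n` matrices (as `Fin n → Fin n → ℝ`). -/
def stdGaussianMat (n : ℕ) : Measure (Fin n → Fin n → ℝ) :=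
  Measure.pi fun _ => stdGaussian (Fin n)

/-- Query maps of a deterministic `t`-round adaptive algorithm making `k` linear
measurements per round on inputs in `ℝ^N`. -/
def QueryMaps (N k t : ℕ) : Type :=
  (j : Fin t) → (Fin (j : ℕ) → (Fin k → ℝ)) → Matrix (Fin k) (Fin N) ℝ

namespace QueryMaps

variable {N k t : ℕ}

/-- Restriction of a round-`j` history to the first `i` rounds. -/
def prefixHist {j : Fin t} (h : Fin (j : ℕ) → Fin k → ℝ) {i : Fin t}
    (hij : (i : ℕ) < (j : ℕ)) : Fin (i : ℕ) → Fin k → ℝ :=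
  fun l => h ⟨l.1, l.isLt.trans hij⟩

/-- Validity of query maps: measurability, orthonormal rows within each round, and
orthogonality across rounds along consistent histories. -/
def Valid (Q : QueryMaps N k t) : Prop :=
  (∀ (j : Fin t) (i : Fin k) (l : Fin N), Measurable fun h => Q j h i l) ∧
  (∀ (j : Fin t) (h : Fin (j : ℕ) → Fin k → ℝ), Q j h * (Q j h)ᵀ = 1) ∧
  (∀ (j i : Fin t) (hij : (i : ℕ) < (j : ℕ)) (h : Fin (j : ℕ) → Fin k → ℝ),
      Q j h * (Q i (prefixHist h hij))ᵀ = 0)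

/-- Responses of the algorithm under exact linear measurements of `a`. -/
def resp (Q : QueryMaps N k t) (a : Fin N → ℝ) (j : Fin t) : Fin k → ℝ :=
  (Q j fun i => resp Q a ⟨i.1, i.isLt.trans j.isLt⟩).mulVec a
termination_by (j : ℕ)
decreasing_by exact i.isLt

/-- Responses of the algorithm under noisy linear measurements of `a`, with fresh
per-round noise `g`. -/
def nresp (Q : QueryMaps N k t) (a : Fin N → ℝ) (g : Fin t → Fin k → ℝ) (j : Fin t) :
    Fin k → ℝ :=
  ((Q j fun i => nresp Q a g ⟨i.1, i.isLt.trans j.isLt⟩).mulVec a) + g j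
termination_by (j : ℕ)
decreasing_by exact i.isLt

/-- The `tk × N` matrix stacking all the query matrices realized along the run of the
algorithm on input `a` (exact measurements). -/
def runMat (Q : QueryMaps N k t) (a : Fin N → ℝ) : Matrix (Fin t × Fin k) (Fin N) ℝ :=
  Matrix.of fun p l =>
    Q p.1 (fun i => resp Q a ⟨i.1, i.isLt.trans p.1.isLt⟩) p.2 l

end QueryMaps

/-- Kullback–Leibler divergence, valued in `[0, ∞]`, defined with the natural
logarithm. -/
def klDiv {Ω : Type*} [MeasurableSpace Ω] (P Q : Measure Ω) : ℝ≥0∞ :=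
  if P ≪ Q ∧ Integrable (fun x => Real.log ((P.rnDeriv Q x).toReal)) P then
    ENNReal.ofReal (∫ x, Real.log ((P.rnDeriv Q x).toReal) ∂P)
  else ⊤


/-- The rank-`r` plant `Σ_{i=1}^r uᵢ vᵢᵀ` built from the rows of `U` and `V`. -/
def plant {n r : ℕ} (U V : Fin r → Fin n → ℝ) : Matrix (Fin n) (Fin n) ℝ :=
  Matrix.of fun i j => ∑ l, U l i * V l j

/-- Schatten-`p` norm (real `p`), via the singular values. -/
def schattenNorm {n : ℕ} (p : ℝ) (A : Matrix (Fin n) (Fin n) ℝ) : ℝ :=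
  (∑ i ∈ Finset.range n, singVal A (i + 1) ^ p) ^ (1 / p)

/-- Ky-Fan `p` norm: sum of the `p` largest singular values. -/
def kyFanNorm {n : ℕ} (p : ℕ) (A : Matrix (Fin n) (Fin n) ℝ) : ℝ :=
  ∑ i ∈ Finset.range p, singVal A (i + 1)

section SqNorm

variable {ι κ : Type*} [Fintype ι] [Fintype κ]

lemma sqNorm_nonneg (x : ι → ℝ) : 0 ≤ sqNorm x :=
  Finset.sum_nonneg fun _ _ => sq_nonneg _

lemma sqNorm_eq_dotProduct (x : ι → ℝ) : sqNorm x = x ⬝ᵥ x := by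
  simp only [sqNorm, dotProduct, sq]

lemma sqNorm_smul (c : ℝ) (x : ι → ℝ) : sqNorm (c • x) = c ^ 2 * sqNorm x := by
  simp only [sqNorm, Pi.smul_apply, smul_eq_mul, mul_pow, Finset.mul_sum]

lemma sqNorm_eq_norm_sq (x : ι → ℝ) : sqNorm x = ‖WithLp.toLp 2 x‖ ^ 2 := by
  rw [EuclideanSpace.real_norm_sq_eq, sqNorm]

lemma sqrt_sqNorm (x : ι → ℝ) : √(sqNorm x) = ‖WithLp.toLp 2 x‖ := by
  rw [sqNorm_eq_norm_sq, Real.sqrt_sq (norm_nonneg _)]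

lemma dotProduct_le_sqrt_mul_sqrt (x y : ι → ℝ) : x ⬝ᵥ y ≤ √(sqNorm x) * √(sqNorm y) := by
  rw [sqrt_sqNorm, sqrt_sqNorm, mul_comm]
  exact real_inner_le_norm (WithLp.toLp 2 y) (WithLp.toLp 2 x)

lemma sqNorm_mulVec (A : Matrix κ ι ℝ) (x : ι → ℝ) : sqNorm (A *ᵥ x) = x ⬝ᵥ (Aᵀ * A) *ᵥ x := by
  rw [← mulVec_mulVec, dotProduct_transpose_mulVec, sqNorm_eq_dotProduct]

lemma frobSq_eq_trace (A : Matrix κ ι ℝ) : frobSq A = (A * Aᵀ).trace := by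
  simp only [frobSq, trace, diag, mul_apply, transpose_apply, sq]

end SqNorm

section OrthonormalRows

variable {ι κ : Type*} [Fintype ι] [Fintype κ] [DecidableEq κ] {Q : Matrix κ ι ℝ}

/-- Pythagoras for the orthogonal projection `Qᵀ * Q` onto the row space. -/
lemma sqNorm_mulVec_add_sqNorm_sub (hQ : Q * Qᵀ = 1) (x : ι → ℝ) :
    sqNorm (Q *ᵥ x) + sqNorm (x - Qᵀ *ᵥ (Q *ᵥ x)) = sqNorm x := by
  have hproj : sqNorm (Qᵀ *ᵥ (Q *ᵥ x)) = sqNorm (Q *ᵥ x) := by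
    rw [sqNorm_mulVec, transpose_transpose, hQ, one_mulVec, sqNorm_eq_dotProduct]
  have hcross : x ⬝ᵥ Qᵀ *ᵥ (Q *ᵥ x) = sqNorm (Q *ᵥ x) := by
    rw [dotProduct_transpose_mulVec, sqNorm_eq_dotProduct]
  rw [sqNorm_eq_dotProduct (x - _), sub_dotProduct, dotProduct_sub, dotProduct_sub,
    dotProduct_comm (Qᵀ *ᵥ _) x, ← sqNorm_eq_dotProduct, ← sqNorm_eq_dotProduct, hproj, hcross]
  ring

lemma sqNorm_mulVec_le (hQ : Q * Qᵀ = 1) (x : ι → ℝ) : sqNorm (Q *ᵥ x) ≤ sqNorm x := by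
  linarith [sqNorm_mulVec_add_sqNorm_sub hQ x, sqNorm_nonneg (x - Qᵀ *ᵥ (Q *ᵥ x))]

lemma sqNorm_sub_proj_le (hQ : Q * Qᵀ = 1) (x : ι → ℝ) {y : ι → ℝ} (hy : Qᵀ *ᵥ (Q *ᵥ y) = y) :
    sqNorm (x - Qᵀ *ᵥ (Q *ᵥ x)) ≤ sqNorm (x - y) := by
  have hres : (x - y) - Qᵀ *ᵥ (Q *ᵥ (x - y)) = x - Qᵀ *ᵥ (Q *ᵥ x) := by
    rw [mulVec_sub, mulVec_sub, hy]; abel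
  rw [← hres]
  linarith [sqNorm_mulVec_add_sqNorm_sub hQ (x - y), sqNorm_nonneg (Q *ᵥ (x - y))]

lemma frobSq_eq_card (hQ : Q * Qᵀ = 1) : frobSq Q = Fintype.card κ := by
  have hrow (i : κ) : ∑ j, Q i j ^ 2 = 1 := by
    simpa [mul_apply, sq] using congrFun (congrFun hQ i) i
  simp [frobSq, hrow]

end OrthonormalRows

section ColumnSpace

variable {ι κ : Type*} [Fintype ι] [Fintype κ]

lemma exists_orthonormalRows_submodule (V : Submodule ℝ (EuclideanSpace ℝ ι)) :
    ∃ Q : Matrix (Fin (Module.finrank ℝ V)) ι ℝ, Q * Qᵀ = 1 ∧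
      ∀ x, WithLp.toLp 2 x ∈ V → Qᵀ *ᵥ (Q *ᵥ x) = x := by
  set e := stdOrthonormalBasis ℝ V
  refine ⟨Matrix.of fun i => WithLp.ofLp (e i : EuclideanSpace ℝ ι), ?_, fun x hx => ?_⟩
  · ext i j
    rw [one_apply, ← orthonormal_iff_ite.mp e.orthonormal i j, Submodule.coe_inner]
    exact dotProduct_comm _ _
  · have hrepr := congrArg (fun z : V => WithLp.ofLp (z : EuclideanSpace ℝ ι))
      (e.sum_repr' ⟨WithLp.toLp 2 x, hx⟩)
    simp only [Submodule.coe_sum, Submodule.coe_smul, WithLp.ofLp_sum, WithLp.ofLp_smul,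
      Submodule.coe_inner] at hrepr
    refine Eq.trans ?_ hrepr
    rw [mulVec_transpose, vecMul_eq_sum]
    exact Finset.sum_congr rfl fun i _ => congrArg (· • _) (dotProduct_comm _ _)

lemma exists_orthonormalRows_of_rank (B : Matrix ι κ ℝ) :
    ∃ Q : Matrix (Fin B.rank) ι ℝ, Q * Qᵀ = 1 ∧ ∀ y, Qᵀ *ᵥ (Q *ᵥ (B *ᵥ y)) = B *ᵥ y := by
  let V := B.mulVecLin.range.map (WithLp.linearEquiv 2 ℝ (ι → ℝ)).symm.toLinearMap
  have hV : Module.finrank ℝ V = B.rank := LinearEquiv.finrank_map_eq _ _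
  obtain ⟨Q, hQ, hproj⟩ := hV ▸ exists_orthonormalRows_submodule V
  exact ⟨Q, hQ, fun y => hproj _ ⟨B *ᵥ y, ⟨y, rfl⟩, rfl⟩⟩

end ColumnSpace

section SpecNorm

variable {m n : Type*} [Fintype m] [Fintype n]

lemma specNorm_nonneg (A : Matrix m n ℝ) : 0 ≤ specNorm A :=
  Real.sSup_nonneg (by rintro _ ⟨x, -, rfl⟩; exact Real.sqrt_nonneg _)

open scoped Matrix.Norms.L2Operator in
lemma specNorm_eq_l2_opNorm (A : Matrix m n ℝ) : specNorm A = ‖A‖ := by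
  rw [l2_opNorm_def, ← ContinuousLinearMap.sSup_unitClosedBall_eq_norm, specNorm]
  congr 1
  ext c
  have hball (x : n → ℝ) : sqNorm x ≤ 1 ↔ ‖WithLp.toLp 2 x‖ ≤ 1 := by
    rw [← Real.sqrt_le_one, sqrt_sqNorm]
  simp only [Set.mem_image, Set.mem_ofPred_eq, Metric.mem_closedBall, dist_zero_right, hball,
    sqrt_sqNorm]
  exact (WithLp.equiv 2 (n → ℝ)).symm.exists_congr fun _ => Iff.rfl

open scoped Matrix.Norms.L2Operator in
lemma specNorm_add_le (A B : Matrix m n ℝ) : specNorm (A + B) ≤ specNorm A + specNorm B := by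
  simpa only [specNorm_eq_l2_opNorm] using norm_add_le A B

open scoped Matrix.Norms.L2Operator in
lemma specNorm_sub_rev (A B : Matrix m n ℝ) : specNorm (A - B) = specNorm (B - A) := by
  simpa only [specNorm_eq_l2_opNorm] using norm_sub_rev A B

open scoped Matrix.Norms.L2Operator in
lemma specNorm_eq_zero {A : Matrix m n ℝ} : specNorm A = 0 ↔ A = 0 := by
  rw [specNorm_eq_l2_opNorm, norm_eq_zero]

open scoped Matrix.Norms.L2Operator in
lemma continuous_specNorm : Continuous (specNorm : Matrix m n ℝ → ℝ) := by
  rw [show (specNorm : Matrix m n ℝ → ℝ) = norm from funext specNorm_eq_l2_opNorm]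
  exact continuous_norm

open scoped Matrix.Norms.L2Operator in
lemma sqrt_sqNorm_mulVec_le (A : Matrix m n ℝ) (x : n → ℝ) :
    √(sqNorm (A *ᵥ x)) ≤ specNorm A * √(sqNorm x) := by
  rw [sqrt_sqNorm, sqrt_sqNorm, specNorm_eq_l2_opNorm]
  exact l2_opNorm_mulVec A (WithLp.toLp 2 x)

lemma sqNorm_mulVec_le_specNorm_sq (A : Matrix m n ℝ) (x : n → ℝ) :
    sqNorm (A *ᵥ x) ≤ specNorm A ^ 2 * sqNorm x := by
  have hsq := pow_le_pow_left₀ (Real.sqrt_nonneg _) (sqrt_sqNorm_mulVec_le A x) 2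
  rwa [mul_pow, Real.sq_sqrt (sqNorm_nonneg _), Real.sq_sqrt (sqNorm_nonneg _)] at hsq

lemma dotProduct_mulVec_le (A : Matrix m n ℝ) (x : m → ℝ) (y : n → ℝ) :
    x ⬝ᵥ A *ᵥ y ≤ √(sqNorm x) * (specNorm A * √(sqNorm y)) :=
  (dotProduct_le_sqrt_mul_sqrt _ _).trans
    (mul_le_mul_of_nonneg_left (sqrt_sqNorm_mulVec_le A y) (Real.sqrt_nonneg _))

lemma specNorm_le_of_dotProduct_mulVec_le {A : Matrix m n ℝ} {c : ℝ} (hc : 0 ≤ c)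
    (h : ∀ x y, sqNorm x ≤ 1 → sqNorm y ≤ 1 → x ⬝ᵥ A *ᵥ y ≤ c) : specNorm A ≤ c := by
  refine Real.sSup_le ?_ hc
  rintro _ ⟨y, hy, rfl⟩
  change √(sqNorm (A *ᵥ y)) ≤ c
  rcases (sqNorm_nonneg (A *ᵥ y)).eq_or_lt with hzero | hpos
  · simpa [← hzero] using hc
  · have hunit : sqNorm ((√(sqNorm (A *ᵥ y)))⁻¹ • A *ᵥ y) ≤ 1 := by
      rw [sqNorm_smul, inv_pow, Real.sq_sqrt hpos.le, inv_mul_cancel₀ hpos.ne']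
    have hdot := h _ y hunit hy
    rwa [smul_dotProduct, ← sqNorm_eq_dotProduct, smul_eq_mul, inv_mul_eq_div,
      Real.div_sqrt] at hdot

lemma eq_zero_of_rank_eq_zero {K m n : Type*} [Field K] [Fintype n] {A : Matrix m n K}
    (hA : A.rank = 0) : A = 0 := by
  rw [rank, Submodule.finrank_eq_zero, LinearMap.range_eq_bot] at hA
  exact toLin'.injective (by simpa [toLin'_apply'] using hA)

lemma singVal_nonneg (A : Matrix m n ℝ) (i : ℕ) : 0 ≤ singVal A i :=
  Real.sInf_nonneg (by rintro _ ⟨X, -, rfl⟩; exact specNorm_nonneg _)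

lemma singVal_le_specNorm (A : Matrix m n ℝ) (i : ℕ) : singVal A i ≤ specNorm A :=
  csInf_le ⟨0, by rintro _ ⟨X, -, rfl⟩; exact specNorm_nonneg _⟩ ⟨0, by simp, by simp⟩

lemma singVal_one (A : Matrix m n ℝ) : singVal A 1 = specNorm A := by
  refine le_antisymm (singVal_le_specNorm A 1) (le_csInf ⟨_, 0, by simp, rfl⟩ ?_)
  rintro _ ⟨X, hX, rfl⟩
  have hrank : X.rank = 0 := by simpa using hX
  rw [eq_zero_of_rank_eq_zero hrank, sub_zero]

end SpecNorm

section KyFan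

variable {n : ℕ}

lemma kyFanNorm_nonneg (p : ℕ) (A : Matrix (Fin n) (Fin n) ℝ) : 0 ≤ kyFanNorm p A :=
  Finset.sum_nonneg fun _ _ => singVal_nonneg A _

lemma specNorm_le_kyFanNorm {p : ℕ} (hp : 1 ≤ p) (A : Matrix (Fin n) (Fin n) ℝ) :
    specNorm A ≤ kyFanNorm p A := by
  rw [← singVal_one]
  exact Finset.single_le_sum (f := fun i => singVal A (i + 1))
    (fun i _ => singVal_nonneg A _) (Finset.mem_range.mpr hp)

lemma kyFanNorm_le (p : ℕ) (A : Matrix (Fin n) (Fin n) ℝ) : kyFanNorm p A ≤ p * specNorm A := by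
  refine (Finset.sum_le_sum fun i _ => singVal_le_specNorm A (i + 1)).trans ?_
  simp only [Finset.sum_const, Finset.card_range, nsmul_eq_mul, le_refl]

/-- The factor `3p` comes from `‖·‖ ≤ ‖·‖_{F_p} ≤ p ‖·‖` and the triangle inequality. -/
lemma specNorm_sub_le_of_kyFanNorm_sub_le {r p : ℕ} (hp : 1 ≤ p)
    {A P B : Matrix (Fin n) (Fin n) ℝ} (hP : P.rank ≤ r) {τ : ℝ} (hτ : specNorm (A - P) ≤ τ)
    (h : kyFanNorm p (A - B) ≤ 2 * sInf {c' | ∃ X : Matrix (Fin n) (Fin n) ℝ,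
      X.rank ≤ r ∧ c' = kyFanNorm p (A - X)}) :
    specNorm (P - B) ≤ 3 * p * τ := by
  have hopt : sInf {c' | ∃ X : Matrix (Fin n) (Fin n) ℝ, X.rank ≤ r ∧ c' = kyFanNorm p (A - X)}
      ≤ kyFanNorm p (A - P) :=
    csInf_le ⟨0, by rintro _ ⟨X, -, rfl⟩; exact kyFanNorm_nonneg _ _⟩ ⟨P, hP, rfl⟩
  have htri : specNorm (P - B) ≤ specNorm (A - P) + specNorm (A - B) := by
    rw [specNorm_sub_rev A P]
    simpa using specNorm_add_le (P - A) (A - B)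
  have hp' : (1 : ℝ) ≤ p := by exact_mod_cast hp
  have hpτ : kyFanNorm p (A - P) ≤ p * τ := (kyFanNorm_le p _).trans (by gcongr)
  have hτp : τ ≤ p * τ := le_mul_of_one_le_left ((specNorm_nonneg _).trans hτ) hp'
  linarith [specNorm_le_kyFanNorm hp (A - B)]

end KyFan

-- The bare name is ambiguous with `ProbabilityTheory.stdGaussian`.
local notation "γ" => (_root_.stdGaussian)

section ProductMeasures

variable {ι : Type*} [Fintype ι] {X : ι → Type*} [∀ i, MeasurableSpace (X i)]
  (μ : ∀ i, Measure (X i)) [∀ i, IsProbabilityMeasure (μ i)] {f : ∀ i, X i → ℝ≥0∞}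

lemma lintegral_pi_prod (hf : ∀ i, Measurable (f i)) :
    ∫⁻ x, ∏ i, f i (x i) ∂Measure.pi μ = ∏ i, ∫⁻ y, f i y ∂μ i := by
  refine (lintegral_prod_eq_prod_lintegral_of_indepFun (μ := Measure.pi μ) Finset.univ
    (fun i x => f i (x i)) (iIndepFun_pi fun i => (hf i).aemeasurable)
    fun i => (hf i).comp (measurable_pi_apply i)).trans ?_
  exact Finset.prod_congr rfl fun i _ => (measurePreserving_eval μ i).lintegral_comp (hf i)

lemma pi_withDensity [∀ i, SigmaFinite ((μ i).withDensity (f i))] (hf : ∀ i, Measurable (f i)) :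
    Measure.pi (fun i => (μ i).withDensity (f i))
      = (Measure.pi μ).withDensity fun x => ∏ i, f i (x i) := by
  refine Measure.pi_eq (μ := fun i => (μ i).withDensity (f i)) fun s hs => ?_
  have hind (x : ∀ i, X i) : (Set.univ.pi s).indicator (fun x => ∏ i, f i (x i)) x
      = ∏ i, (s i).indicator (f i) (x i) := by
    by_cases hx : x ∈ Set.univ.pi s
    · rw [Set.indicator_of_mem hx]
      exact Finset.prod_congr rfl fun i _ => (Set.indicator_of_mem (hx i (Set.mem_univ i)) _).symm
    · obtain ⟨i, hi⟩ : ∃ i, x i ∉ s i := by simpa [Set.mem_univ_pi] using hx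
      rw [Set.indicator_of_notMem hx,
        Finset.prod_eq_zero (Finset.mem_univ i) (Set.indicator_of_notMem hi _)]
  rw [withDensity_apply _ (.univ_pi hs), ← lintegral_indicator (.univ_pi hs)]
  simp only [hind, lintegral_pi_prod μ fun i => (hf i).indicator (hs i),
    lintegral_indicator (hs _), withDensity_apply _ (hs _)]

end ProductMeasures

section StdGaussian

variable {ι κ : Type*} [Fintype ι] [Fintype κ]

instance instIsProbabilityMeasureStdGaussian : IsProbabilityMeasure (γ ι) := by
  unfold _root_.stdGaussian; infer_instance

lemma integral_cexp_dotProduct_stdGaussian (c : ι → ℝ) :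
    ∫ g, Complex.exp ((c ⬝ᵥ g : ℝ) * Complex.I) ∂γ ι = Complex.exp (-(sqNorm c : ℝ) / 2) := by
  have hchar := charFun_stdGaussian (WithLp.toLp 2 c)
  rw [← map_pi_eq_stdGaussian, charFun_apply, integral_map (by fun_prop) (by fun_prop),
    ← Complex.ofReal_pow, ← sqNorm_eq_norm_sq] at hchar
  exact hchar

lemma eq_stdGaussian_of_integral_cexp {μ : Measure (ι → ℝ)} [IsFiniteMeasure μ]
    (hμ : ∀ c : ι → ℝ, ∫ g, Complex.exp ((c ⬝ᵥ g : ℝ) * Complex.I) ∂μ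
      = Complex.exp (-(sqNorm c : ℝ) / 2)) : μ = γ ι := by
  refine Measure.ext_of_charFunDual (funext fun L => ?_)
  obtain ⟨c, hL⟩ : ∃ c : ι → ℝ, ∀ g, L g = c ⬝ᵥ g := by
    refine ⟨fun i => L (Pi.single i 1), fun g => ?_⟩
    conv_lhs => rw [pi_eq_sum_univ' g]
    simp only [map_sum, map_smul, dotProduct, smul_eq_mul, mul_comm]
  simp only [charFunDual_apply, hL, hμ, integral_cexp_dotProduct_stdGaussian]

lemma map_dotProduct_stdGaussian (c : ι → ℝ) :
    (γ ι).map (c ⬝ᵥ ·) = gaussianReal 0 (sqNorm c).toNNReal := by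
  refine Measure.ext_of_charFun (funext fun t => ?_)
  have hsmul (g : ι → ℝ) : (t : ℂ) * (c ⬝ᵥ g : ℝ) = ((t • c) ⬝ᵥ g : ℝ) := by
    rw [smul_dotProduct, smul_eq_mul, Complex.ofReal_mul]
  rw [charFun_gaussianReal, charFun_apply_real, integral_map (by fun_prop) (by fun_prop)]
  simp only [hsmul, integral_cexp_dotProduct_stdGaussian, sqNorm_smul]
  rw [Real.coe_toNNReal _ (sqNorm_nonneg c)]
  congr 1
  push_cast
  ring

lemma map_mulVec_stdGaussian [DecidableEq κ] {Q : Matrix κ ι ℝ} (hQ : Q * Qᵀ = 1) :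
    (γ ι).map (Q *ᵥ ·) = γ κ := by
  have hcont : Continuous fun g : ι → ℝ => Q *ᵥ g := by fun_prop
  have := Measure.isProbabilityMeasure_map (μ := γ ι) hcont.aemeasurable
  refine eq_stdGaussian_of_integral_cexp fun c => ?_
  rw [integral_map hcont.aemeasurable (by fun_prop)]
  simp only [dotProduct_mulVec, ← mulVec_transpose, integral_cexp_dotProduct_stdGaussian]
  rw [sqNorm_mulVec, transpose_transpose, hQ, one_mulVec, sqNorm_eq_dotProduct]

lemma hasSubgaussianMGF_dotProduct {c : ι → ℝ} {v : NNReal} (hc : sqNorm c ≤ v) :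
    HasSubgaussianMGF (c ⬝ᵥ ·) v (γ ι) where
  integrable_exp_mul t := by
    have hint := integrable_exp_mul_gaussianReal (μ := 0) (v := (sqNorm c).toNNReal) t
    rw [← map_dotProduct_stdGaussian] at hint
    exact hint.comp_aemeasurable (by fun_prop)
  mgf_le t := by
    rw [mgf_gaussianReal (map_dotProduct_stdGaussian c), zero_mul, zero_add,
      Real.coe_toNNReal _ (sqNorm_nonneg c)]
    gcongr

lemma lintegral_exp_dotProduct_stdGaussian (c : ι → ℝ) :
    ∫⁻ g, ENNReal.ofReal (Real.exp (c ⬝ᵥ g)) ∂γ ι = ENNReal.ofReal (Real.exp (sqNorm c / 2)) := by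
  have hint := (hasSubgaussianMGF_dotProduct (Real.le_coe_toNNReal (sqNorm c))).integrable_exp_mul 1
  have hmgf := mgf_gaussianReal (map_dotProduct_stdGaussian c) 1
  simp only [mgf, one_mul, zero_add, one_pow, mul_one,
    Real.coe_toNNReal _ (sqNorm_nonneg c)] at hint hmgf
  rw [← ofReal_integral_eq_lintegral_ofReal hint (.of_forall fun _ => (Real.exp_pos _).le), hmgf]

lemma lintegral_exp_mul_sq_gaussianReal_le {a : ℝ} (ha : 0 ≤ a) (ha' : a ≤ 1 / 4) :
    ∫⁻ x, ENNReal.ofReal (Real.exp (a * x ^ 2)) ∂gaussianReal 0 1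
      ≤ ENNReal.ofReal (Real.exp (2 * a)) := by
  have hb : 0 < 1 / 2 - a := by linarith
  have hpdf (x : ℝ) : gaussianPDF 0 1 x * ENNReal.ofReal (Real.exp (a * x ^ 2))
      = ENNReal.ofReal ((√(2 * Real.pi))⁻¹ * Real.exp (-(1 / 2 - a) * x ^ 2)) := by
    rw [gaussianPDF, ← ENNReal.ofReal_mul (gaussianPDFReal_nonneg _ _ _), gaussianPDFReal,
      mul_assoc, ← Real.exp_add]
    simp only [NNReal.coe_one, mul_one, sub_zero]
    ring_nf
  rw [gaussianReal_of_var_ne_zero _ one_ne_zero, lintegral_withDensity_eq_lintegral_mul _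
    (measurable_gaussianPDF 0 1) (by fun_prop)]
  simp only [Pi.mul_apply, hpdf]
  rw [← ofReal_integral_eq_lintegral_ofReal ((integrable_exp_neg_mul_sq hb).const_mul _)
    (.of_forall fun _ => by positivity), integral_const_mul, integral_gaussian]
  refine ENNReal.ofReal_le_ofReal ?_
  calc (√(2 * Real.pi))⁻¹ * √(Real.pi / (1 / 2 - a)) = √(1 / (1 - 2 * a)) := by
        rw [← Real.sqrt_inv, ← Real.sqrt_mul (by positivity)]
        congr 1
        field_simp
    _ ≤ √(Real.exp (4 * a)) := by
        refine Real.sqrt_le_sqrt ((div_le_iff₀ (by linarith)).mpr ?_)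
        nlinarith [Real.exp_pos (4 * a), Real.quadratic_le_exp_of_nonneg (x := 4 * a) (by linarith)]
    _ = Real.exp (2 * a) := by rw [← Real.exp_half]; ring_nf

/-- The quadratic form is diagonal in an orthonormal eigenbasis, and `γ` is rotation invariant. -/
lemma lintegral_exp_quadForm_stdGaussian_le {A : Matrix ι ι ℝ} (hA : A.PosSemidef)
    (hle : ∀ x, x ⬝ᵥ A *ᵥ x ≤ 1 / 4 * sqNorm x) :
    ∫⁻ g, ENNReal.ofReal (Real.exp (g ⬝ᵥ A *ᵥ g)) ∂γ ι
      ≤ ENNReal.ofReal (Real.exp (2 * A.trace)) := by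
  set ev := hA.1.eigenvalues
  obtain ⟨Q, hQ, hspec⟩ : ∃ Q : Matrix ι ι ℝ, Q * Qᵀ = 1 ∧ A = Qᵀ * diagonal ev * Q :=
    ⟨(hA.1.eigenvectorUnitary : Matrix ι ι ℝ)ᵀ,
      Unitary.coe_star_mul_self hA.1.eigenvectorUnitary, hA.1.spectral_theorem⟩
  have hquad (g : ι → ℝ) : g ⬝ᵥ A *ᵥ g = ∑ i, ev i * (Q *ᵥ g) i ^ 2 := by
    rw [hspec, ← mulVec_mulVec, ← mulVec_mulVec, dotProduct_transpose_mulVec, dotProduct_comm]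
    simp only [dotProduct, mulVec_diagonal]
    exact Finset.sum_congr rfl fun i _ => by ring
  have hev (i : ι) : ev i ≤ 1 / 4 := by
    have hQe : Q *ᵥ (Qᵀ *ᵥ Pi.single i 1) = Pi.single i 1 := by rw [mulVec_mulVec, hQ, one_mulVec]
    have hi := hle (Qᵀ *ᵥ Pi.single i 1)
    rw [hquad, sqNorm_mulVec, transpose_transpose, hQ, hQe] at hi
    simpa [Pi.single_apply] using hi
  calc ∫⁻ g, ENNReal.ofReal (Real.exp (g ⬝ᵥ A *ᵥ g)) ∂γ ι
      = ∫⁻ g, ∏ i, ENNReal.ofReal (Real.exp (ev i * (Q *ᵥ g) i ^ 2)) ∂γ ι := by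
        simp only [hquad, Real.exp_sum,
          ENNReal.ofReal_prod_of_nonneg fun _ _ => (Real.exp_pos _).le]
    _ = ∫⁻ g, ∏ i, ENNReal.ofReal (Real.exp (ev i * g i ^ 2)) ∂γ ι := by
        conv_rhs => rw [← map_mulVec_stdGaussian hQ]
        rw [lintegral_map (by fun_prop) (by fun_prop)]
    _ = ∏ i, ∫⁻ y, ENNReal.ofReal (Real.exp (ev i * y ^ 2)) ∂gaussianReal 0 1 :=
        lintegral_pi_prod (fun _ => gaussianReal 0 1)
          (f := fun i y => ENNReal.ofReal (Real.exp (ev i * y ^ 2))) fun i => by fun_prop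
    _ ≤ ∏ i, ENNReal.ofReal (Real.exp (2 * ev i)) := Finset.prod_le_prod' fun i _ =>
        lintegral_exp_mul_sq_gaussianReal_le (hA.eigenvalues_nonneg i) (hev i)
    _ = ENNReal.ofReal (Real.exp (2 * A.trace)) := by
        rw [← ENNReal.ofReal_prod_of_nonneg fun i _ => (Real.exp_pos _).le, ← Real.exp_sum,
          ← Finset.mul_sum, hA.1.trace_eq_sum_eigenvalues]
        rfl

end StdGaussian

section SignVectors

variable {ι m : Type*} [Fintype ι] [Fintype m]

/-- The `±1` vector of a Boolean vector; uniform Booleans model a uniform sign vector. -/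
def sgn (u : ι → Bool) : ι → ℝ := fun i => if u i then 1 else -1

lemma sqNorm_sgn (u : ι → Bool) : sqNorm (sgn u) = Fintype.card ι := by
  have hsq (i : ι) : sgn u i ^ 2 = 1 := by unfold sgn; split_ifs <;> norm_num
  simp [sqNorm, hsq]

lemma sum_exp_dotProduct_sgn_le [DecidableEq ι] (z : ι → ℝ) :
    ∑ u, Real.exp (z ⬝ᵥ sgn u) ≤ 2 ^ Fintype.card ι * Real.exp (sqNorm z / 2) := by
  calc ∑ u, Real.exp (z ⬝ᵥ sgn u)
      = ∏ i, ∑ b : Bool, Real.exp (z i * if b then 1 else -1) := by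
        rw [Finset.prod_univ_sum, Fintype.piFinset_univ]
        exact Finset.sum_congr rfl fun u _ => Real.exp_sum _ _
    _ ≤ ∏ i, 2 * Real.exp (z i ^ 2 / 2) := by
        refine Finset.prod_le_prod (fun i _ => by positivity) fun i _ => ?_
        have hcosh := Real.cosh_le_exp_half_sq (z i)
        rw [Real.cosh_eq] at hcosh
        simp only [Fintype.sum_bool, if_true, Bool.false_eq_true, if_false, mul_one, mul_neg]
        linarith
    _ = 2 ^ Fintype.card ι * Real.exp (sqNorm z / 2) := by
        rw [Finset.prod_mul_distrib, ← Real.exp_sum, ← Finset.sum_div, Finset.prod_const,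
          Finset.card_univ, sqNorm]

lemma sqNorm_transpose_mulVec_le {T : Matrix m ι ℝ} {κ : ℝ} (hκ : 0 ≤ κ)
    (hT : ∀ x, sqNorm (T *ᵥ x) ≤ κ * sqNorm x) (y : m → ℝ) :
    sqNorm (Tᵀ *ᵥ y) ≤ κ * sqNorm y := by
  have hcs : sqNorm (Tᵀ *ᵥ y) ^ 2 ≤ sqNorm y * sqNorm (T *ᵥ (Tᵀ *ᵥ y)) := by
    rw [sqNorm_mulVec, transpose_transpose, ← mulVec_mulVec]
    exact Finset.sum_mul_sq_le_sq_mul_sq _ _ _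
  nlinarith [hT (Tᵀ *ᵥ y), sqNorm_nonneg y, sqNorm_nonneg (Tᵀ *ᵥ y),
    mul_nonneg hκ (sqNorm_nonneg y)]

lemma ofReal_exp_mul_sqNorm {lam : ℝ} (hlam : 0 ≤ lam) (x : m → ℝ) :
    ENNReal.ofReal (Real.exp (lam * sqNorm x))
      = ∫⁻ h, ENNReal.ofReal (Real.exp (√(2 * lam) * (x ⬝ᵥ h))) ∂γ m := by
  simp only [← smul_eq_mul, ← smul_dotProduct]
  rw [lintegral_exp_dotProduct_stdGaussian, sqNorm_smul, Real.sq_sqrt (by positivity)]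
  congr 2
  rw [smul_eq_mul]
  ring

/-- Writing `exp (lam ‖Tu‖²)` as a Gaussian average of exponentials of linear forms in `u`
decouples the coordinates of `u`. -/
lemma sum_exp_sqNorm_mulVec_sgn_le [DecidableEq ι] (T : Matrix m ι ℝ) {lam κ : ℝ}
    (hlam : 0 ≤ lam) (hκ : 0 ≤ κ) (hT : ∀ x, sqNorm (T *ᵥ x) ≤ κ * sqNorm x)
    (hle : lam * κ ≤ 1 / 4) :
    ∑ u, Real.exp (lam * sqNorm (T *ᵥ sgn u))
      ≤ 2 ^ Fintype.card ι * Real.exp (2 * lam * frobSq T) := by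
  have hquad (h : m → ℝ) : h ⬝ᵥ (lam • (T * Tᵀ)) *ᵥ h = lam * sqNorm (Tᵀ *ᵥ h) := by
    rw [sqNorm_mulVec, transpose_transpose, smul_mulVec, dotProduct_smul, smul_eq_mul]
  have hsum (h : m → ℝ) :
      ∑ u, ENNReal.ofReal (Real.exp (√(2 * lam) * ((T *ᵥ sgn u) ⬝ᵥ h)))
        ≤ ENNReal.ofReal (2 ^ Fintype.card ι)
          * ENNReal.ofReal (Real.exp (h ⬝ᵥ (lam • (T * Tᵀ)) *ᵥ h)) := by
    rw [← ENNReal.ofReal_sum_of_nonneg fun _ _ => (Real.exp_pos _).le,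
      ← ENNReal.ofReal_mul (by positivity)]
    refine ENNReal.ofReal_le_ofReal ?_
    have hz := sum_exp_dotProduct_sgn_le (√(2 * lam) • (Tᵀ *ᵥ h))
    rw [sqNorm_smul, Real.sq_sqrt (by positivity), mul_assoc 2, mul_div_cancel_left₀ _ two_ne_zero,
      ← hquad] at hz
    simpa only [smul_dotProduct, smul_eq_mul, dotProduct_comm (Tᵀ *ᵥ h),
      dotProduct_transpose_mulVec, dotProduct_comm h] using hz
  have hpsd : (lam • (T * Tᵀ)).PosSemidef := (posSemidef_self_mul_conjTranspose T).smul hlam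
  have hgauss := lintegral_exp_quadForm_stdGaussian_le hpsd fun h => by
    rw [hquad]
    nlinarith [mul_le_mul_of_nonneg_left (sqNorm_transpose_mulVec_le hκ hT h) hlam,
      sqNorm_nonneg h]
  rw [trace_smul, ← frobSq_eq_trace, smul_eq_mul, ← mul_assoc] at hgauss
  rw [← ENNReal.ofReal_le_ofReal_iff (by positivity),
    ENNReal.ofReal_sum_of_nonneg fun _ _ => (Real.exp_pos _).le]
  simp only [ofReal_exp_mul_sqNorm hlam]
  rw [← lintegral_finsetSum' _ fun u _ => by fun_prop]
  refine (lintegral_mono hsum).trans ?_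
  rw [lintegral_const_mul' _ _ ENNReal.ofReal_ne_top, ENNReal.ofReal_mul (by positivity)]
  gcongr

end SignVectors

section SignTensors

variable {n : ℕ} {m : Type*}

lemma tensor_apply (u v : Fin n → ℝ) (a b : Fin n) :
    tensor u v (finProdFinEquiv (a, b)) = u a * v b := by
  simp only [tensor, _root_.vec, of_apply, Equiv.symm_apply_apply]

lemma sum_fin_mul (f : Fin (n * n) → ℝ) : ∑ l, f l = ∑ a, ∑ b, f (finProdFinEquiv (a, b)) := by
  rw [← finProdFinEquiv.sum_comp, Fintype.sum_prod_type]

lemma sqNorm_tensor (u v : Fin n → ℝ) : sqNorm (tensor u v) = sqNorm u * sqNorm v := by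
  simp only [sqNorm, sum_fin_mul, tensor_apply, mul_pow, Finset.sum_mul_sum]

/-- Pairs of sign vectors, the index set of the planted directions. -/
abbrev SignPair (n : ℕ) : Type := (Fin n → Bool) × (Fin n → Bool)

/-- The planted direction `u ⊗ v` of a pair of sign vectors. -/
def signTensor (w : SignPair n) : Fin (n * n) → ℝ := tensor (sgn w.1) (sgn w.2)

lemma card_signPair (n : ℕ) : (Fintype.card (SignPair n) : ℝ) = 2 ^ n * 2 ^ n := by
  simp [SignPair]

/-- The unfolding of a query matrix `Q` on `ℝⁿ ⊗ ℝⁿ` in which the second tensor leg is moved to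
the rows, so that the first leg is the only input. -/
def unfold (Q : Matrix m (Fin (n * n)) ℝ) : Matrix (m × Fin n) (Fin n) ℝ :=
  of fun ib a => Q ib.1 (finProdFinEquiv (a, ib.2))

/-- The contraction `v ↦ Q (u ⊗ v)` of a query matrix `Q` on `ℝⁿ ⊗ ℝⁿ` with `u`. -/
def contract (Q : Matrix m (Fin (n * n)) ℝ) (u : Fin n → ℝ) : Matrix m (Fin n) ℝ :=
  of fun i b => (unfold Q *ᵥ u) (i, b)

lemma contract_mulVec (Q : Matrix m (Fin (n * n)) ℝ) (u v : Fin n → ℝ) :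
    contract Q u *ᵥ v = Q *ᵥ tensor u v := by
  ext i
  simp only [mulVec, dotProduct, contract, unfold, of_apply, sum_fin_mul, tensor_apply,
    Finset.sum_mul, mul_assoc]
  exact Finset.sum_comm

variable [Fintype m]

lemma frobSq_contract (Q : Matrix m (Fin (n * n)) ℝ) (u : Fin n → ℝ) :
    frobSq (contract Q u) = sqNorm (unfold Q *ᵥ u) := by
  simp only [frobSq, sqNorm, Fintype.sum_prod_type, contract, of_apply]

lemma frobSq_unfold (Q : Matrix m (Fin (n * n)) ℝ) : frobSq (unfold Q) = frobSq Q := by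
  simp only [frobSq, Fintype.sum_prod_type, unfold, of_apply, sum_fin_mul]
  exact Finset.sum_congr rfl fun i _ => Finset.sum_comm

variable [DecidableEq m] {Q : Matrix m (Fin (n * n)) ℝ}

lemma sqNorm_contract_mulVec_le (hQ : Q * Qᵀ = 1) (u v : Fin n → ℝ) :
    sqNorm (contract Q u *ᵥ v) ≤ sqNorm u * sqNorm v := by
  rw [contract_mulVec, ← sqNorm_tensor]
  exact sqNorm_mulVec_le hQ _

lemma sqNorm_unfold_mulVec_le (hQ : Q * Qᵀ = 1) (u : Fin n → ℝ) :
    sqNorm (unfold Q *ᵥ u) ≤ n * sqNorm u := by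
  calc sqNorm (unfold Q *ᵥ u) = ∑ b, sqNorm (contract Q u *ᵥ Pi.single b 1) := by
        simp only [sqNorm, Fintype.sum_prod_type_right, mulVec_single_one, col_apply, contract,
          of_apply]
    _ ≤ ∑ _b : Fin n, sqNorm u := Finset.sum_le_sum fun b _ => by
        simpa [sqNorm_eq_dotProduct] using sqNorm_contract_mulVec_le hQ u (Pi.single b 1)
    _ = n * sqNorm u := by simp

/-- Apply the sign-vector bound first in `v`, for the contraction of `Q` with `u`, and then in `u`,
for the unfolding of `Q`. -/
lemma sum_exp_sqNorm_mulVec_signTensor_le (hn : 0 < n) (hQ : Q * Qᵀ = 1) :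
    ∑ w : SignPair n, Real.exp (1 / (8 * n) * sqNorm (Q *ᵥ signTensor w))
      ≤ Fintype.card (SignPair n) * Real.exp (Fintype.card m / (2 * n)) := by
  have hn' : (0 : ℝ) < n := by exact_mod_cast hn
  have hv (u : Fin n → Bool) :
      ∑ v, Real.exp (1 / (8 * n) * sqNorm (Q *ᵥ signTensor (u, v)))
        ≤ 2 ^ n * Real.exp (1 / (4 * n) * sqNorm (unfold Q *ᵥ sgn u)) := by
    have hsum := sum_exp_sqNorm_mulVec_sgn_le (contract Q (sgn u)) (lam := 1 / (8 * n))
      (by positivity) (sqNorm_nonneg _) (sqNorm_contract_mulVec_le hQ (sgn u))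
      (by rw [sqNorm_sgn, Fintype.card_fin]; field_simp; norm_num)
    simp only [contract_mulVec, Fintype.card_fin, frobSq_contract] at hsum
    refine hsum.trans_eq ?_
    congr 3
    ring
  have hu := sum_exp_sqNorm_mulVec_sgn_le (unfold Q) (lam := 1 / (4 * n)) (by positivity)
    hn'.le (sqNorm_unfold_mulVec_le hQ) (by field_simp; norm_num)
  rw [frobSq_unfold, frobSq_eq_card hQ, Fintype.card_fin] at hu
  calc ∑ w : SignPair n, Real.exp (1 / (8 * n) * sqNorm (Q *ᵥ signTensor w))
      ≤ ∑ u, 2 ^ n * Real.exp (1 / (4 * n) * sqNorm (unfold Q *ᵥ sgn u)) := by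
        rw [Fintype.sum_prod_type]
        exact Finset.sum_le_sum fun u _ => hv u
    _ ≤ 2 ^ n * (2 ^ n * Real.exp (2 * (1 / (4 * n)) * Fintype.card m)) := by
        rw [← Finset.mul_sum]
        gcongr
    _ = Fintype.card (SignPair n) * Real.exp (Fintype.card m / (2 * n)) := by
        rw [card_signPair]
        ring_nf

lemma card_le_of_sum_exp_le {W : Type*} [Fintype W] {f : W → ℝ} {C lam x : ℝ} (hlam : 0 ≤ lam)
    (hC : ∑ w, Real.exp (lam * f w) ≤ C) {s : Finset W} (hs : ∀ w ∈ s, x ≤ f w) :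
    (s.card : ℝ) ≤ C * Real.exp (-(lam * x)) := by
  have hmul : s.card * Real.exp (lam * x) ≤ C := calc
    s.card * Real.exp (lam * x) = ∑ _w ∈ s, Real.exp (lam * x) := by simp
    _ ≤ ∑ w ∈ s, Real.exp (lam * f w) := Finset.sum_le_sum fun w hw => by
        have := hs w hw
        gcongr
    _ ≤ ∑ w, Real.exp (lam * f w) :=
        Finset.sum_le_univ_sum_of_nonneg fun _ => (Real.exp_pos _).le
    _ ≤ C := hC
  rwa [Real.exp_neg, ← div_eq_mul_inv, le_div_iff₀ (Real.exp_pos _)]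

lemma card_le_of_le_sqNorm_mulVec_signTensor (hn : 0 < n) (hQ : Q * Qᵀ = 1) {x : ℝ}
    {s : Finset (SignPair n)} (hs : ∀ w ∈ s, x ≤ sqNorm (Q *ᵥ signTensor w)) :
    (s.card : ℝ) ≤ Fintype.card (SignPair n)
      * Real.exp (-(x / (8 * n) - Fintype.card m / (2 * n))) := by
  refine (card_le_of_sum_exp_le (by positivity) (sum_exp_sqNorm_mulVec_signTensor_le hn hQ)
    hs).trans_eq ?_
  rw [mul_assoc, ← Real.exp_add]
  ring_nf

end SignTensors

section LowRankBall

lemma isOpen_le_rank {ι κ : Type*} [Finite ι] [Fintype κ] (r : ℕ) :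
    IsOpen {M : Matrix ι κ ℝ | r ≤ M.rank} := by
  cases nonempty_fintype ι
  have hrank (M : Matrix ι κ ℝ) : r ≤ M.rank ↔ (r : Cardinal) ≤ M.mulVecLin.rank := by
    rw [Matrix.rank, LinearMap.rank, ← Module.finrank_eq_rank, Nat.cast_le]
  simp only [hrank, LinearMap.le_rank_iff_exists_linearIndependent_finset, Set.ofPred_exists,
    ← exists_prop]
  refine isOpen_biUnion fun t _ => isOpen_setOfPred_linearIndependent.preimage
    (f := fun (M : Matrix ι κ ℝ) (x : (t : Set (κ → ℝ))) => M *ᵥ x) ?_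
  fun_prop

variable {ι κ : Type*} [Fintype ι] [Fintype κ]

/-- The matrices of rank at most `r` within spectral distance `η` of `P`: the outputs that count as
a successful approximation of the plant `P`. -/
def lowRankBall (r : ℕ) (P : Matrix ι κ ℝ) (η : ℝ) : Set (Matrix ι κ ℝ) :=
  {B | B.rank ≤ r ∧ specNorm (P - B) ≤ η}

lemma isClosed_lowRankBall (r : ℕ) (P : Matrix ι κ ℝ) (η : ℝ) :
    IsClosed (lowRankBall r P η) := by
  have hrank : IsClosed {B : Matrix ι κ ℝ | B.rank ≤ r} := by
    simpa only [Set.compl_ofPred, not_le, Nat.succ_le_iff, not_lt] using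
      (isOpen_le_rank (ι := ι) (κ := κ) (r + 1)).isClosed_compl
  exact hrank.inter <|
    isClosed_le (continuous_specNorm.comp (continuous_const.sub continuous_id)) continuous_const

lemma measurableSet_preimage_lowRankBall {X : Type*} [MeasurableSpace X] {f : X → Matrix ι κ ℝ}
    (hf : ∀ i j, Measurable fun x => f x i j) (r : ℕ) (P : Matrix ι κ ℝ) (η : ℝ) :
    MeasurableSet (f ⁻¹' lowRankBall r P η) := by
  have hmeas : Measurable (fun x i j => f x i j : X → ι → κ → ℝ) := by fun_prop
  exact hmeas (IsClosed.measurableSet (α := ι → κ → ℝ) (isClosed_lowRankBall r P η))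

end LowRankBall

section SignPlants

variable {n r : ℕ} {s η : ℝ}

/-- The hidden rank-one matrix `s u vᵀ` of a pair `(u, v)` of sign vectors. -/
def signPlant (s : ℝ) (w : SignPair n) : Matrix (Fin n) (Fin n) ℝ :=
  vecMulVec (s • sgn w.1) (sgn w.2)

lemma rank_signPlant_le (s : ℝ) (w : SignPair n) : (signPlant s w).rank ≤ 1 :=
  rank_vecMulVec_le _ _

lemma vec_signPlant (s : ℝ) (w : SignPair n) :
    _root_.vec n (signPlant s w) = s • signTensor w := by
  ext l
  simp [_root_.vec, signPlant, signTensor, tensor, vecMulVec_apply, mul_assoc]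

lemma signPlant_mulVec_sgn (s : ℝ) (w : SignPair n) :
    signPlant s w *ᵥ sgn w.2 = (s * n) • sgn w.1 := by
  rw [signPlant, vecMulVec_mulVec, ← sqNorm_eq_dotProduct, sqNorm_sgn, Fintype.card_fin]
  ext i
  simp only [Pi.smul_apply, smul_eq_mul, MulOpposite.smul_eq_mul_unop, MulOpposite.unop_op]
  ring

/-- If `B` is close to `s u vᵀ`, then `B v` is close to `s n u`, so most of `u` lies in the column
space of `B`. -/
lemma le_sqNorm_mulVec_of_specNorm_sub_le {d : ℕ} (hs : 0 < s) (hη : 2 * η ≤ s * n)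
    {B : Matrix (Fin n) (Fin n) ℝ} {T : Matrix (Fin d) (Fin n) ℝ} (hT : T * Tᵀ = 1)
    (hTB : ∀ y, Tᵀ *ᵥ (T *ᵥ (B *ᵥ y)) = B *ᵥ y) {w : SignPair n}
    (hB : specNorm (signPlant s w - B) ≤ η) : 3 * n / 4 ≤ sqNorm (T *ᵥ sgn w.1) := by
  have hsgn (u : Fin n → Bool) : sqNorm (sgn u) = n := by rw [sqNorm_sgn, Fintype.card_fin]
  have hproj := calc
    (s * n) ^ 2 * n = sqNorm (signPlant s w *ᵥ sgn w.2) := by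
        rw [signPlant_mulVec_sgn, sqNorm_smul, hsgn]
    _ ≤ sqNorm (T *ᵥ (signPlant s w *ᵥ sgn w.2))
          + sqNorm (signPlant s w *ᵥ sgn w.2 - B *ᵥ sgn w.2) := by
        rw [← sqNorm_mulVec_add_sqNorm_sub hT]
        gcongr
        exact sqNorm_sub_proj_le hT _ (hTB _)
    _ ≤ (s * n) ^ 2 * sqNorm (T *ᵥ sgn w.1) + (s * n / 2) ^ 2 * n := by
        rw [← sub_mulVec, signPlant_mulVec_sgn, mulVec_smul, sqNorm_smul]
        gcongr
        refine (sqNorm_mulVec_le_specNorm_sq _ _).trans ?_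
        rw [hsgn]
        gcongr
        · exact specNorm_nonneg _
        · linarith
  rcases (Nat.cast_nonneg n : (0 : ℝ) ≤ n).eq_or_lt with hn | hn
  · simpa [← hn] using sqNorm_nonneg (T *ᵥ sgn w.1)
  · refine le_of_mul_le_mul_left ?_ (by positivity : 0 < (s * n) ^ 2)
    linarith

lemma card_le_of_mem_lowRankBall_signPlant (hs : 0 < s) (hη : 2 * η ≤ s * n)
    {B : Matrix (Fin n) (Fin n) ℝ} {S : Finset (SignPair n)}
    (hS : ∀ w ∈ S, B ∈ lowRankBall r (signPlant s w) η) :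
    (S.card : ℝ) ≤ Fintype.card (SignPair n) * Real.exp (-(3 * n / 16 - r / 2)) := by
  rcases S.eq_empty_or_nonempty with rfl | ⟨w₀, hw₀⟩
  · simp only [Finset.card_empty, Nat.cast_zero]
    positivity
  have hr : (B.rank : ℝ) ≤ r := by exact_mod_cast (hS w₀ hw₀).1
  obtain ⟨T, hT, hTB⟩ := exists_orthonormalRows_of_rank B
  have hsum : ∑ w : SignPair n, Real.exp (1 / 4 * sqNorm (T *ᵥ sgn w.1))
      ≤ Fintype.card (SignPair n) * Real.exp ((r : ℝ) / 2) := by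
    have hu := sum_exp_sqNorm_mulVec_sgn_le T (lam := 1 / 4) (by norm_num) zero_le_one
      (fun x => (sqNorm_mulVec_le hT x).trans_eq (one_mul _).symm) (by norm_num)
    rw [frobSq_eq_card hT, Fintype.card_fin, Fintype.card_fin] at hu
    calc ∑ w : SignPair n, Real.exp (1 / 4 * sqNorm (T *ᵥ sgn w.1))
        = 2 ^ n * ∑ u, Real.exp (1 / 4 * sqNorm (T *ᵥ sgn u)) := by
          simp [Fintype.sum_prod_type, Finset.mul_sum]
      _ ≤ 2 ^ n * (2 ^ n * Real.exp (2 * (1 / 4) * r)) := by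
          refine mul_le_mul_of_nonneg_left (hu.trans ?_) (by positivity)
          gcongr
      _ = Fintype.card (SignPair n) * Real.exp ((r : ℝ) / 2) := by
          rw [card_signPair]
          ring_nf
  refine (card_le_of_sum_exp_le (by norm_num) hsum fun w hw =>
    le_sqNorm_mulVec_of_specNorm_sub_le hs hη hT hTB (hS w hw).2).trans_eq ?_
  rw [mul_assoc, ← Real.exp_add]
  ring_nf

end SignPlants

section Nets

variable {ι κ : Type*} [Fintype ι] [Fintype κ]

/-- A quarter-net of the Euclidean unit ball whose points lie in the ball. -/
structure IsQuarterNet (S : Finset (ι → ℝ)) : Prop where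
  sqNorm_le_one : ∀ z ∈ S, sqNorm z ≤ 1
  exists_sqNorm_sub_le : ∀ x, sqNorm x ≤ 1 → ∃ z ∈ S, sqNorm (x - z) ≤ 1 / 16

lemma specNorm_le_of_isQuarterNet {S : Finset (ι → ℝ)} {T : Finset (κ → ℝ)}
    (hS : IsQuarterNet S) (hT : IsQuarterNet T) {A : Matrix ι κ ℝ} {c : ℝ} (hc : 0 ≤ c)
    (h : ∀ z ∈ S, ∀ z' ∈ T, z ⬝ᵥ A *ᵥ z' ≤ c) : specNorm A ≤ 2 * c := by
  have hA := specNorm_nonneg A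
  have hsqrt {b : ℝ} (hb : b ≤ 1 / 16) : √b ≤ 1 / 4 :=
    Real.sqrt_le_iff.mpr ⟨by norm_num, hb.trans (by norm_num)⟩
  have hself : specNorm A ≤ c + specNorm A / 2 := by
    refine specNorm_le_of_dotProduct_mulVec_le (by positivity) fun x y hx hy => ?_
    obtain ⟨z, hz, hxz⟩ := hS.exists_sqNorm_sub_le x hx
    obtain ⟨z', hz', hyz'⟩ := hT.exists_sqNorm_sub_le y hy
    calc x ⬝ᵥ A *ᵥ y = z ⬝ᵥ A *ᵥ z' + (x - z) ⬝ᵥ A *ᵥ y + z ⬝ᵥ A *ᵥ (y - z') := by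
          rw [mulVec_sub, dotProduct_sub, sub_dotProduct]
          ring
      _ ≤ c + 1 / 4 * (specNorm A * 1) + 1 * (specNorm A * (1 / 4)) := by
          refine add_le_add (add_le_add (h z hz z' hz') ?_) ?_ <;>
          refine (dotProduct_mulVec_le A _ _).trans ?_
          · gcongr
            exacts [hsqrt hxz, Real.sqrt_le_one.mpr hy]
          · gcongr
            exacts [Real.sqrt_le_one.mpr (hS.sqNorm_le_one z hz), hsqrt hyz']
      _ = c + specNorm A / 2 := by ring
  linarith

/-- Rounding towards zero keeps the grid points inside the unit ball. -/
lemma exists_int_div_near {q : ℕ} (hq : 0 < q) (x : ℝ) :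
    ∃ j : ℤ, |(j / q : ℝ)| ≤ |x| ∧ |x - j / q| ≤ 1 / q := by
  have hq' : (0 : ℝ) < q := by exact_mod_cast hq
  wlog hx : 0 ≤ x generalizing x
  · obtain ⟨j, hj, hxj⟩ := this (-x) (by linarith)
    refine ⟨-j, ?_, ?_⟩
    · rwa [Int.cast_neg, neg_div, abs_neg, ← abs_neg x]
    · rwa [Int.cast_neg, neg_div, ← abs_neg, neg_sub', sub_neg_eq_add]
  have hfloor := Int.floor_le (x * q)
  have hlt := (Int.lt_floor_add_one (x * q)).le
  refine ⟨⌊x * q⌋, ?_, ?_⟩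
  · rwa [abs_of_nonneg (by positivity), abs_of_nonneg hx, div_le_iff₀ hq']
  · rw [abs_of_nonneg (by rwa [sub_nonneg, div_le_iff₀ hq']), sub_le_iff_le_add, ← add_div,
      le_div_iff₀ hq']
    linarith

/-- The points of `(ℤ/q)^ι` in the unit ball, listed as a subset of `[-1, 1]^ι`. -/
def gridBall (ι : Type*) [Fintype ι] (q : ℕ) : Finset (ι → ℝ) :=
  (Fintype.piFinset fun _ => (Finset.Icc (-q : ℤ) q).image fun j : ℤ => (j / q : ℝ)).filter
    fun z => sqNorm z ≤ 1

lemma card_gridBall_le (q : ℕ) : (gridBall ι q).card ≤ (2 * q + 1) ^ Fintype.card ι := by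
  refine (Finset.card_filter_le _ _).trans ?_
  rw [Fintype.card_piFinset, Finset.prod_const, Finset.card_univ]
  refine Nat.pow_le_pow_left (Finset.card_image_le.trans_eq ?_) _
  rw [Int.card_Icc]
  lia

lemma isQuarterNet_gridBall {q : ℕ} (hq : 0 < q) (hcard : 16 * Fintype.card ι ≤ q ^ 2) :
    IsQuarterNet (gridBall ι q) := by
  refine ⟨fun z hz => (Finset.mem_filter.mp hz).2, fun x hx => ?_⟩
  have hq' : (0 : ℝ) < q := by exact_mod_cast hq
  choose j hj hxj using fun i => exists_int_div_near hq (x i)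
  have hxi (i : ι) : |x i| ≤ 1 := (sq_le_one_iff_abs_le_one _).mp <|
    (Finset.single_le_sum (f := fun i => x i ^ 2) (fun _ _ => sq_nonneg _)
      (Finset.mem_univ i)).trans hx
  refine ⟨fun i => j i / q, Finset.mem_filter.mpr ⟨Fintype.mem_piFinset.mpr fun i =>
    Finset.mem_image_of_mem _ (Finset.mem_Icc.mpr (abs_le.mp ?_)), ?_⟩, ?_⟩
  · have hle := (hj i).trans (hxi i)
    rw [abs_div, Nat.abs_cast, div_le_one hq'] at hle
    exact_mod_cast hle
  · exact (Finset.sum_le_sum fun i _ => sq_le_sq.mpr (hj i)).trans hx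
  · calc sqNorm (x - fun i => (j i / q : ℝ)) ≤ ∑ _i : ι, (1 / q : ℝ) ^ 2 :=
          Finset.sum_le_sum fun i _ => sq_le_sq.mpr <| (hxj i).trans (le_abs_self _)
      _ ≤ 1 / 16 := by
          have : (16 * Fintype.card ι : ℝ) ≤ q ^ 2 := by exact_mod_cast hcard
          rw [Finset.sum_const, nsmul_eq_mul, Finset.card_univ, div_pow, one_pow, mul_one_div,
            div_le_div_iff₀ (by positivity) (by norm_num)]
          linarith

end Nets

section GaussianMatrix

variable {n : ℕ}

/-- The `n × n` matrix with a given flattening. -/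
def unvec (g : Fin (n * n) → ℝ) : Matrix (Fin n) (Fin n) ℝ :=
  Matrix.of fun i j => g (finProdFinEquiv (i, j))

lemma vec_unvec (g : Fin (n * n) → ℝ) : _root_.vec n (unvec g) = g := by
  ext l
  exact congrArg g (finProdFinEquiv.apply_symm_apply l)

lemma dotProduct_unvec_mulVec (g : Fin (n * n) → ℝ) (x y : Fin n → ℝ) :
    x ⬝ᵥ unvec g *ᵥ y = tensor x y ⬝ᵥ g := by
  simp only [dotProduct, mulVec, unvec, of_apply, sum_fin_mul, tensor_apply, Finset.mul_sum]
  exact Finset.sum_congr rfl fun i _ => Finset.sum_congr rfl fun j _ => by ring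

lemma measureReal_lt_specNorm_unvec_le {S : Finset (Fin n → ℝ)} (hS : IsQuarterNet S) {c : ℝ}
    (hc : 0 ≤ c) :
    (γ (Fin (n * n))).real {g | 2 * c < specNorm (unvec g)}
      ≤ S.card ^ 2 * Real.exp (-c ^ 2 / 2) := by
  have hsub : {g : Fin (n * n) → ℝ | 2 * c < specNorm (unvec g)}
      ⊆ ⋃ z ∈ S ×ˢ S, {g | c ≤ tensor z.1 z.2 ⬝ᵥ g} := by
    intro g hg
    by_contra hcon
    simp only [Set.mem_iUnion, not_exists, Set.mem_ofPred_eq, not_le] at hcon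
    refine hg.not_ge (specNorm_le_of_isQuarterNet hS hS hc fun z hz z' hz' => ?_)
    rw [dotProduct_unvec_mulVec]
    exact (hcon (z, z') (Finset.mk_mem_product hz hz')).le
  have hterm (z) (hz : z ∈ S ×ˢ S) :
      (γ (Fin (n * n))).real {g | c ≤ tensor z.1 z.2 ⬝ᵥ g} ≤ Real.exp (-c ^ 2 / 2) := by
    obtain ⟨hz₁, hz₂⟩ := Finset.mem_product.mp hz
    have hle : sqNorm (tensor z.1 z.2) ≤ (1 : NNReal) := by
      rw [sqNorm_tensor]
      exact mul_le_one₀ (hS.sqNorm_le_one _ hz₁) (sqNorm_nonneg _) (hS.sqNorm_le_one _ hz₂)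
    simpa using (hasSubgaussianMGF_dotProduct hle).measure_ge_le hc
  calc (γ (Fin (n * n))).real {g | 2 * c < specNorm (unvec g)}
      ≤ ∑ z ∈ S ×ˢ S, (γ (Fin (n * n))).real {g | c ≤ tensor z.1 z.2 ⬝ᵥ g} :=
        (measureReal_mono hsub (measure_ne_top _ _)).trans (measureReal_biUnion_finset_le _ _)
    _ ≤ (S ×ˢ S).card • Real.exp (-c ^ 2 / 2) := Finset.sum_le_card_nsmul _ _ _ hterm
    _ = S.card ^ 2 * Real.exp (-c ^ 2 / 2) := by
        rw [Finset.card_product, nsmul_eq_mul, Nat.cast_mul, sq (S.card : ℝ)]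

lemma one_le_log {x : ℝ} (hx : 3 ≤ x) : 1 ≤ Real.log x := by
  rw [Real.le_log_iff_exp_le (by linarith)]
  linarith [Real.exp_one_lt_d9]

lemma measureReal_lt_specNorm_unvec_le_tenth (hn : 16 ≤ n) :
    (γ (Fin (n * n))).real {g | √(40 * n * Real.log n) < specNorm (unvec g)} ≤ 1 / 10 := by
  have hn' : (16 : ℝ) ≤ n := by exact_mod_cast hn
  have hlog : 1 ≤ Real.log n := one_le_log (by linarith)
  have hsqrt : √(40 * n * Real.log n) = 2 * √(10 * n * Real.log n) := by
    rw [show 40 * n * Real.log n = 2 ^ 2 * (10 * n * Real.log n) by ring,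
      Real.sqrt_mul (by norm_num), Real.sqrt_sq zero_le_two]
  have hcard : ((gridBall (Fin n) n).card : ℝ) ≤ n ^ (2 * n) := by
    have hle : 2 * n + 1 ≤ n ^ 2 := by nlinarith
    have := (card_gridBall_le (ι := Fin n) n).trans (Nat.pow_le_pow_left hle _)
    rw [Fintype.card_fin, ← pow_mul] at this
    exact_mod_cast this
  have hpow : ((n : ℝ) ^ (2 * n)) ^ 2 = Real.exp (4 * n * Real.log n) := by
    rw [show 4 * n * Real.log n = (2 * n * 2 : ℕ) * Real.log n by push_cast; ring,
      Real.exp_nat_mul, Real.exp_log (by linarith), ← pow_mul]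
  have hnet : IsQuarterNet (gridBall (Fin n) n) :=
    isQuarterNet_gridBall (by lia) (by rw [Fintype.card_fin]; nlinarith)
  rw [hsqrt]
  calc (γ (Fin (n * n))).real {g | 2 * √(10 * n * Real.log n) < specNorm (unvec g)}
      ≤ (gridBall (Fin n) n).card ^ 2 * Real.exp (-√(10 * n * Real.log n) ^ 2 / 2) :=
        measureReal_lt_specNorm_unvec_le hnet (Real.sqrt_nonneg _)
    _ ≤ (n ^ (2 * n)) ^ 2 * Real.exp (-√(10 * n * Real.log n) ^ 2 / 2) := by gcongr
    _ = Real.exp (-(n * Real.log n)) := by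
        rw [Real.sq_sqrt (by positivity), hpow, ← Real.exp_add]
        ring_nf
    _ ≤ 1 / 10 := by
        rw [Real.exp_neg, ← one_div]
        refine one_div_le_one_div_of_le (by norm_num) ?_
        nlinarith [Real.add_one_le_exp (n * Real.log n)]

lemma nine_tenths_le_measure_specNorm_unvec_le (hn : 16 ≤ n) :
    9 / 10 ≤ γ (Fin (n * n)) {g | specNorm (unvec g) ≤ √(40 * n * Real.log n)} := by
  have hmeas : Measurable fun g : Fin (n * n) → ℝ => specNorm (unvec g) :=
    (continuous_specNorm.comp (by unfold unvec; fun_prop)).measurable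
  have hcompl := probReal_compl_eq_one_sub (μ := γ (Fin (n * n)))
    (measurableSet_lt measurable_const hmeas : MeasurableSet {g | √(40 * n * Real.log n) < _})
  have htail := measureReal_lt_specNorm_unvec_le_tenth hn
  simp only [Set.compl_ofPred, not_lt] at hcompl
  rw [show (9 / 10 : ℝ≥0∞) = ENNReal.ofReal (9 / 10) by
    rw [ENNReal.ofReal_div_of_pos (by norm_num)]; simp]
  refine (ENNReal.ofReal_le_iff_le_toReal (measure_ne_top _ _)).mpr ?_
  rw [measureReal_def] at hcompl
  linarith

end GaussianMatrix

section GaussianTransport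

variable {ι κ : Type*} [Fintype ι] [Fintype κ]

/-- Replaces the component `Q a` of `a` along the rows of `Q` by a given vector. -/
def resample (Q : Matrix κ ι ℝ) (x : (κ → ℝ) × (ι → ℝ)) : ι → ℝ :=
  x.2 + Qᵀ *ᵥ (x.1 - Q *ᵥ x.2)

lemma measurable_resample (Q : Matrix κ ι ℝ) : Measurable (resample Q) := by
  have hcont : Continuous (resample Q) := by
    unfold resample
    fun_prop
  exact hcont.measurable

lemma dotProduct_resample (Q : Matrix κ ι ℝ) (c : ι → ℝ) (x : (κ → ℝ) × (ι → ℝ)) :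
    c ⬝ᵥ resample Q x = (Q *ᵥ c) ⬝ᵥ x.1 + (c - Qᵀ *ᵥ (Q *ᵥ c)) ⬝ᵥ x.2 := by
  rw [resample, dotProduct_add, sub_dotProduct, dotProduct_comm (Qᵀ *ᵥ _) x.2,
    dotProduct_transpose_mulVec, dotProduct_transpose_mulVec, sub_dotProduct, dotProduct_comm x.1,
    dotProduct_comm (Q *ᵥ x.2)]
  ring

lemma map_resample [DecidableEq κ] {Q : Matrix κ ι ℝ} (hQ : Q * Qᵀ = 1) :
    ((γ κ).prod (γ ι)).map (resample Q) = γ ι := by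
  have := Measure.isProbabilityMeasure_map (μ := (γ κ).prod (γ ι))
    (measurable_resample Q).aemeasurable
  refine eq_stdGaussian_of_integral_cexp fun c => ?_
  have hcont : Continuous fun g : ι → ℝ => Complex.exp ((c ⬝ᵥ g : ℝ) * Complex.I) := by fun_prop
  rw [integral_map (measurable_resample Q).aemeasurable hcont.measurable.aestronglyMeasurable]
  simp only [dotProduct_resample, Complex.ofReal_add, add_mul, Complex.exp_add]
  rw [integral_prod_mul (fun r : κ → ℝ => Complex.exp (((Q *ᵥ c) ⬝ᵥ r : ℝ) * Complex.I))
    (fun g : ι → ℝ => Complex.exp (((c - Qᵀ *ᵥ (Q *ᵥ c)) ⬝ᵥ g : ℝ) * Complex.I)),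
    integral_cexp_dotProduct_stdGaussian, integral_cexp_dotProduct_stdGaussian, ← Complex.exp_add,
    ← sqNorm_mulVec_add_sqNorm_sub hQ c]
  congr 1
  push_cast
  ring

lemma gaussianReal_eq_withDensity_exp (c : ℝ) :
    gaussianReal c 1 = (gaussianReal 0 1).withDensity
      fun y => ENNReal.ofReal (Real.exp (y * c - c ^ 2 / 2)) := by
  rw [gaussianReal_of_var_ne_zero _ one_ne_zero, gaussianReal_of_var_ne_zero _ one_ne_zero,
    ← withDensity_mul _ (measurable_gaussianPDF _ _) (by fun_prop)]
  congr 1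
  ext y
  simp only [Pi.mul_apply, gaussianPDF_def, gaussianPDFReal_def, NNReal.coe_one]
  rw [← ENNReal.ofReal_mul (by positivity), mul_assoc (_⁻¹), ← Real.exp_add]
  ring_nf

lemma map_const_add_stdGaussian (c : ι → ℝ) :
    (γ ι).map (c + ·) = (γ ι).withDensity
      fun r => ENNReal.ofReal (Real.exp (r ⬝ᵥ c - sqNorm c / 2)) := by
  have hprod (r : ι → ℝ) : ENNReal.ofReal (Real.exp (r ⬝ᵥ c - sqNorm c / 2))
      = ∏ i, ENNReal.ofReal (Real.exp (r i * c i - c i ^ 2 / 2)) := by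
    rw [← ENNReal.ofReal_prod_of_nonneg fun _ _ => (Real.exp_pos _).le, ← Real.exp_sum,
      Finset.sum_sub_distrib, ← Finset.sum_div]
    rfl
  have hmap := Measure.pi_map_pi (μ := fun _ : ι => gaussianReal 0 1)
    (f := fun i y => c i + y) (fun i => by fun_prop)
  have (i : ι) : SigmaFinite ((gaussianReal 0 1).withDensity
      fun y => ENNReal.ofReal (Real.exp (y * c i - c i ^ 2 / 2))) := by
    rw [← gaussianReal_eq_withDensity_exp]
    infer_instance
  simp only [gaussianReal_map_const_add, zero_add] at hmap
  simp only [hprod, _root_.stdGaussian]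
  rw [← pi_withDensity (fun _ : ι => gaussianReal 0 1)
    (f := fun i y => ENNReal.ofReal (Real.exp (y * c i - c i ^ 2 / 2))) fun i => by fun_prop]
  simp only [← gaussianReal_eq_withDensity_exp]
  exact hmap

lemma lintegral_const_add_stdGaussian (c : ι → ℝ) {f : (ι → ℝ) → ℝ≥0∞} (hf : Measurable f) :
    ∫⁻ r, f (c + r) ∂γ ι
      = ∫⁻ r, ENNReal.ofReal (Real.exp (r ⬝ᵥ c - sqNorm c / 2)) * f r ∂γ ι := by
  have hcont : Continuous fun r : ι → ℝ => Real.exp (r ⬝ᵥ c - sqNorm c / 2) := by fun_prop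
  rw [← lintegral_map (g := (c + ·)) hf (by fun_prop), map_const_add_stdGaussian,
    lintegral_withDensity_eq_lintegral_mul _ hcont.measurable.ennreal_ofReal hf]
  rfl

end GaussianTransport

section VecCons

variable {X : Type*} [MeasurableSpace X] {m : ℕ}

lemma measurable_vecCons :
    Measurable fun x : X × (Fin m → X) => vecCons x.1 x.2 :=
  measurable_pi_lambda _ fun i =>
    Fin.cases measurable_fst (fun i => (measurable_pi_apply i).comp measurable_snd) i

lemma lintegral_pi_vecCons (μ : Measure X) [SigmaFinite μ] {F : (Fin (m + 1) → X) → ℝ≥0∞}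
    (hF : Measurable F) :
    ∫⁻ ρ, F ρ ∂Measure.pi (fun _ => μ)
      = ∫⁻ r, ∫⁻ ρ, F (vecCons r ρ) ∂Measure.pi (fun _ => μ) ∂μ := by
  have hmp := (measurePreserving_piFinSuccAbove (fun _ : Fin (m + 1) => μ) 0).symm
  refine (hmp.lintegral_comp hF).symm.trans <|
    (lintegral_prod _ (hF.comp hmp.measurable).aemeasurable).trans ?_
  refine lintegral_congr fun r => lintegral_congr fun ρ => congrArg F ?_
  exact Fin.insertNth_zero' r ρ

end VecCons

lemma measurable_mulVec {X ι κ : Type*} [MeasurableSpace X] [Fintype ι] {M : X → Matrix κ ι ℝ}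
    {v : X → ι → ℝ} (hM : ∀ i j, Measurable fun x => M x i j) (hv : Measurable v) :
    Measurable fun x => M x *ᵥ v x := by
  refine measurable_pi_lambda _ fun i => ?_
  simp only [mulVec, dotProduct]
  fun_prop

lemma measurable_sqNorm {ι : Type*} [Fintype ι] : Measurable (sqNorm : (ι → ℝ) → ℝ) := by
  unfold sqNorm
  fun_prop

namespace QueryMaps

variable {N k t : ℕ}

/-- The rounds of a transcript that precede round `j`. -/
def past (ρ : Fin t → Fin k → ℝ) (j : Fin t) : Fin (j : ℕ) → Fin k → ℝ :=
  fun i => ρ ⟨i.1, i.isLt.trans j.isLt⟩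

/-- The query matrix asked in round `j` along the transcript `ρ`. -/
def query (Q : QueryMaps N k t) (ρ : Fin t → Fin k → ℝ) (j : Fin t) : Matrix (Fin k) (Fin N) ℝ :=
  Q j (past ρ j)

/-- The energy of `b` captured by all the queries asked along the transcript `ρ`. -/
def energy (Q : QueryMaps N k t) (b : Fin N → ℝ) (ρ : Fin t → Fin k → ℝ) : ℝ :=
  ∑ j, sqNorm (query Q ρ j *ᵥ b)

/-- The density at `ρ` of the transcript on the noisy input `b + g`, relative to independent
standard Gaussian responses. -/
def lik (Q : QueryMaps N k t) (b : Fin N → ℝ) (ρ : Fin t → Fin k → ℝ) : ℝ :=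
  Real.exp (∑ j, (ρ j ⬝ᵥ query Q ρ j *ᵥ b - sqNorm (query Q ρ j *ᵥ b) / 2))

/-- The queries of the first round. -/
def head (Q : QueryMaps N k (t + 1)) : Matrix (Fin k) (Fin N) ℝ :=
  Q 0 Fin.elim0

/-- The queries asked after the first round when its response is `r`. -/
def tail (Q : QueryMaps N k (t + 1)) (r : Fin k → ℝ) : QueryMaps N k t :=
  fun j h => Q j.succ (vecCons r h)

/-- The algorithm without its last round. -/
def trunc (Q : QueryMaps N k (t + 1)) : QueryMaps N k t :=
  fun j h => Q j.castSucc h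

/-- The law of the transcript on the noisy input `b + g`, with `g` standard Gaussian. -/
def transcriptLaw (Q : QueryMaps N k t) (b : Fin N → ℝ) : Measure (Fin t → Fin k → ℝ) :=
  (γ (Fin N)).map fun g => resp Q (b + g)

section Responses

lemma resp_eq (Q : QueryMaps N k t) (a : Fin N → ℝ) (j : Fin t) :
    resp Q a j = query Q (resp Q a) j *ᵥ a := by
  rw [resp]
  rfl

lemma eq_resp {Q : QueryMaps N k t} {a : Fin N → ℝ} {ρ : Fin t → Fin k → ℝ}
    (h : ∀ j, ρ j = query Q ρ j *ᵥ a) : ρ = resp Q a := by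
  funext j
  induction j using WellFoundedLT.induction with
  | ind j ih =>
    have hpast : past ρ j = past (resp Q a) j := funext fun i => ih _ i.isLt
    rw [h, resp_eq, query, query, hpast]

lemma resp_congr {Q : QueryMaps N k t} {a a' : Fin N → ℝ}
    (h : ∀ j h, Q j h *ᵥ a = Q j h *ᵥ a') : resp Q a = resp Q a' :=
  eq_resp fun j => (resp_eq Q a j).trans (h j _)

lemma query_vecCons_zero (Q : QueryMaps N k (t + 1)) (r : Fin k → ℝ) (ρ : Fin t → Fin k → ℝ) :
    query Q (vecCons r ρ) 0 = head Q :=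
  congrArg (Q 0) (funext fun i => i.elim0)

lemma past_vecCons_succ (r : Fin k → ℝ) (ρ : Fin t → Fin k → ℝ) (j : Fin t) :
    past (vecCons r ρ) j.succ = vecCons r (past ρ j) :=
  funext fun i => Fin.cases rfl (fun _ => rfl) i

lemma query_vecCons_succ (Q : QueryMaps N k (t + 1)) (r : Fin k → ℝ) (ρ : Fin t → Fin k → ℝ)
    (j : Fin t) : query Q (vecCons r ρ) j.succ = query (tail Q r) ρ j :=
  congrArg (Q j.succ) (past_vecCons_succ r ρ j)

lemma resp_succ (Q : QueryMaps N k (t + 1)) (a : Fin N → ℝ) :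
    resp Q a = vecCons (head Q *ᵥ a) (resp (tail Q (head Q *ᵥ a)) a) := by
  refine (eq_resp fun j => ?_).symm
  refine Fin.cases ?_ (fun j => ?_) j
  · rw [query_vecCons_zero, cons_val_zero]
  · rw [query_vecCons_succ, cons_val_succ, ← resp_eq]

lemma resp_trunc (Q : QueryMaps N k (t + 1)) (a : Fin N → ℝ) :
    resp (trunc Q) a = resp Q a ∘ Fin.castSucc :=
  (eq_resp fun j => resp_eq Q a j.castSucc).symm

lemma energy_succ (Q : QueryMaps N k (t + 1)) (b : Fin N → ℝ) (ρ : Fin (t + 1) → Fin k → ℝ) :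
    energy Q b ρ = energy (trunc Q) b (ρ ∘ Fin.castSucc)
      + sqNorm (Q (Fin.last t) (ρ ∘ Fin.castSucc) *ᵥ b) :=
  Fin.sum_univ_castSucc _

lemma Valid.head {Q : QueryMaps N k (t + 1)} (hQ : Q.Valid) :
    QueryMaps.head Q * (QueryMaps.head Q)ᵀ = 1 :=
  hQ.2.1 0 _

lemma Valid.tail {Q : QueryMaps N k (t + 1)} (hQ : Q.Valid) (r : Fin k → ℝ) :
    (QueryMaps.tail Q r).Valid := by
  refine ⟨fun j i l => (hQ.1 j.succ i l).comp (measurable_vecCons.comp measurable_prodMk_left),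
    fun j h => hQ.2.1 j.succ _, fun j i hij h => ?_⟩
  have hprefix : prefixHist (j := j.succ) (i := i.succ) (vecCons r h) (Nat.succ_lt_succ hij)
      = vecCons r (prefixHist h hij) :=
    funext fun l => Fin.cases rfl (fun _ => rfl) l
  have := hQ.2.2 j.succ i.succ (Nat.succ_lt_succ hij) (vecCons r h)
  rwa [hprefix] at this

lemma Valid.tail_mul_head_transpose {Q : QueryMaps N k (t + 1)} (hQ : Q.Valid) (r : Fin k → ℝ)
    (j : Fin t) (h : Fin (j : ℕ) → Fin k → ℝ) :
    QueryMaps.tail Q r j h * (QueryMaps.head Q)ᵀ = 0 := by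
  have := hQ.2.2 j.succ 0 j.succ_pos (vecCons r h)
  rwa [show prefixHist (vecCons r h) j.succ_pos = Fin.elim0 from funext fun i => i.elim0] at this

lemma Valid.trunc {Q : QueryMaps N k (t + 1)} (hQ : Q.Valid) : (QueryMaps.trunc Q).Valid :=
  ⟨fun j => hQ.1 j.castSucc, fun j => hQ.2.1 j.castSucc,
    fun j i hij h => hQ.2.2 j.castSucc i.castSucc hij h⟩

/-- The later rounds see only `g`, because their queries are orthogonal to those of the first. -/
lemma resp_add_resample {Q : QueryMaps N k (t + 1)} (hQ : Q.Valid) (b : Fin N → ℝ)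
    (r : Fin k → ℝ) (g : Fin N → ℝ) :
    resp Q (b + resample (head Q) (r, g))
      = vecCons (head Q *ᵥ b + r) (resp (tail Q (head Q *ᵥ b + r)) (b + g)) := by
  have hhead : head Q *ᵥ (b + resample (head Q) (r, g)) = head Q *ᵥ b + r := by
    rw [resample, mulVec_add, mulVec_add, mulVec_mulVec, hQ.head, one_mulVec]
    abel
  rw [resp_succ, hhead]
  congr 1
  refine resp_congr fun j h => ?_
  rw [resample, mulVec_add, mulVec_add, mulVec_mulVec, hQ.tail_mul_head_transpose, zero_mulVec,
    add_zero, mulVec_add]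

end Responses

section Measurability

lemma measurable_past (j : Fin t) : Measurable fun ρ : Fin t → Fin k → ℝ => past ρ j :=
  measurable_pi_lambda _ fun _ => measurable_pi_apply _

lemma measurable_query_mulVec {Q : QueryMaps N k t} (hQ : Q.Valid) (b : Fin N → ℝ) (j : Fin t) :
    Measurable fun ρ => query Q ρ j *ᵥ b :=
  measurable_mulVec (fun i l => (hQ.1 j i l).comp (measurable_past j)) measurable_const

lemma measurable_energy {Q : QueryMaps N k t} (hQ : Q.Valid) (b : Fin N → ℝ) :
    Measurable (energy Q b) :=
  Finset.measurable_sum _ fun j _ => measurable_sqNorm.comp (measurable_query_mulVec hQ b j)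

lemma measurable_lik {Q : QueryMaps N k t} (hQ : Q.Valid) (b : Fin N → ℝ) :
    Measurable (lik Q b) := by
  have hquery := measurable_query_mulVec hQ b
  have hsq (j : Fin t) := measurable_sqNorm.comp (hquery j)
  simp only [Function.comp_def] at hsq
  unfold lik dotProduct
  fun_prop

lemma measurable_resp_uncurry {X : Type*} [MeasurableSpace X] {Q : X → QueryMaps N k t}
    (hQ : ∀ (j : Fin t) (i : Fin k) (l : Fin N),
      Measurable fun p : X × (Fin (j : ℕ) → Fin k → ℝ) => Q p.1 j p.2 i l) :
    Measurable fun p : X × (Fin N → ℝ) => resp (Q p.1) p.2 := by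
  refine measurable_pi_lambda _ fun j => ?_
  induction j using WellFoundedLT.induction with
  | ind j ih =>
    have hpast : Measurable fun p : X × (Fin N → ℝ) => past (resp (Q p.1) p.2) j :=
      measurable_pi_lambda _ fun i => ih _ i.isLt
    simp only [resp_eq]
    exact measurable_mulVec (fun i l => (hQ j i l).comp (measurable_fst.prodMk hpast))
      measurable_snd

lemma measurable_resp {Q : QueryMaps N k t} (hQ : Q.Valid) : Measurable (resp Q) :=
  (measurable_resp_uncurry (X := Unit) (Q := fun _ => Q)
    fun j i l => (hQ.1 j i l).comp measurable_snd).comp (measurable_prodMk_left (x := ()))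

lemma measurable_resp_add {Q : QueryMaps N k t} (hQ : Q.Valid) (b : Fin N → ℝ) :
    Measurable fun g => resp Q (b + g) :=
  (measurable_resp hQ).comp (measurable_const_add b)

lemma measurable_resp_tail {Q : QueryMaps N k (t + 1)} (hQ : Q.Valid) (b : Fin N → ℝ) :
    Measurable fun p : (Fin k → ℝ) × (Fin N → ℝ) => resp (tail Q p.1) (b + p.2) :=
  (measurable_resp_uncurry fun j i l => (hQ.1 j.succ i l).comp measurable_vecCons).comp
    (measurable_fst.prodMk (measurable_snd.const_add b))

end Measurability

section TranscriptLaw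

lemma lintegral_transcriptLaw {Q : QueryMaps N k t} (hQ : Q.Valid) (b : Fin N → ℝ)
    {F : (Fin t → Fin k → ℝ) → ℝ≥0∞} (hF : Measurable F) :
    ∫⁻ ρ, F ρ ∂transcriptLaw Q b = ∫⁻ g, F (resp Q (b + g)) ∂γ (Fin N) :=
  lintegral_map hF (measurable_resp_add hQ b)

lemma isProbabilityMeasure_transcriptLaw {Q : QueryMaps N k t} (hQ : Q.Valid) (b : Fin N → ℝ) :
    IsProbabilityMeasure (transcriptLaw Q b) :=
  Measure.isProbabilityMeasure_map (measurable_resp_add hQ b).aemeasurable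

lemma map_castSucc_transcriptLaw {Q : QueryMaps N k (t + 1)} (hQ : Q.Valid) (b : Fin N → ℝ) :
    (transcriptLaw Q b).map (· ∘ Fin.castSucc) = transcriptLaw (trunc Q) b := by
  rw [transcriptLaw, Measure.map_map (by fun_prop) (measurable_resp_add hQ b), transcriptLaw]
  simp only [Function.comp_def, resp_trunc]

lemma lintegral_transcriptLaw_succ {Q : QueryMaps N k (t + 1)} (hQ : Q.Valid) (b : Fin N → ℝ)
    {F : (Fin (t + 1) → Fin k → ℝ) → ℝ≥0∞} (hF : Measurable F) :
    ∫⁻ ρ, F ρ ∂transcriptLaw Q b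
      = ∫⁻ r, ∫⁻ ρ, F (vecCons (head Q *ᵥ b + r) ρ) ∂transcriptLaw (tail Q (head Q *ᵥ b + r)) b
          ∂γ (Fin k) := by
  have hresp := hF.comp (measurable_resp_add hQ b)
  have hcons (r : Fin k → ℝ) : Measurable fun ρ => F (vecCons r ρ) :=
    hF.comp (measurable_vecCons.comp measurable_prodMk_left)
  calc ∫⁻ ρ, F ρ ∂transcriptLaw Q b
      = ∫⁻ g, F (resp Q (b + g)) ∂((γ (Fin k)).prod (γ (Fin N))).map (resample (head Q)) := by
        rw [map_resample hQ.head, lintegral_transcriptLaw hQ b hF]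
    _ = ∫⁻ r, ∫⁻ g, F (resp Q (b + resample (head Q) (r, g))) ∂γ (Fin N) ∂γ (Fin k) :=
        (lintegral_map hresp (measurable_resample _)).trans <|
          lintegral_prod _ (hresp.comp (measurable_resample _)).aemeasurable
    _ = _ := lintegral_congr fun r => by
        simp only [resp_add_resample hQ]
        rw [lintegral_transcriptLaw (hQ.tail _) b (hcons _)]

lemma lik_vecCons (Q : QueryMaps N k (t + 1)) (b : Fin N → ℝ) (r : Fin k → ℝ)
    (ρ : Fin t → Fin k → ℝ) :
    lik Q b (vecCons r ρ)
      = Real.exp (r ⬝ᵥ head Q *ᵥ b - sqNorm (head Q *ᵥ b) / 2) * lik (tail Q r) b ρ := by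
  simp only [lik, Fin.sum_univ_succ, query_vecCons_zero, query_vecCons_succ, cons_val_zero,
    cons_val_succ, Real.exp_add]

lemma lintegral_transcriptLaw_eq_lintegral_lik {Q : QueryMaps N k t} (hQ : Q.Valid)
    (b : Fin N → ℝ) {F : (Fin t → Fin k → ℝ) → ℝ≥0∞} (hF : Measurable F) :
    ∫⁻ ρ, F ρ ∂transcriptLaw Q b
      = ∫⁻ ρ, ENNReal.ofReal (lik Q b ρ) * F ρ ∂Measure.pi fun _ => γ (Fin k) := by
  induction t with
  | zero =>
    have := isProbabilityMeasure_transcriptLaw hQ b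
    have hconst (ρ : Fin 0 → Fin k → ℝ) : F ρ = F Fin.elim0 := congrArg F (Subsingleton.elim _ _)
    simp [hconst, lik]
  | succ t ih =>
    set c := head Q *ᵥ b with hc
    set f : (Fin k → ℝ) → ℝ≥0∞ := fun r => ∫⁻ ρ, F (vecCons r ρ) ∂transcriptLaw (tail Q r) b
    have hcons (r : Fin k → ℝ) : Measurable fun ρ => F (vecCons r ρ) :=
      hF.comp (measurable_vecCons.comp measurable_prodMk_left)
    have hf : Measurable f := by
      simp only [f, lintegral_transcriptLaw (hQ.tail _) b (hcons _)]
      exact (hF.comp (measurable_vecCons.comp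
        (measurable_fst.prodMk (measurable_resp_tail hQ b)))).lintegral_prod_right'
    calc ∫⁻ ρ, F ρ ∂transcriptLaw Q b
        = ∫⁻ r, f (c + r) ∂γ (Fin k) := lintegral_transcriptLaw_succ hQ b hF
      _ = ∫⁻ r, ENNReal.ofReal (Real.exp (r ⬝ᵥ c - sqNorm c / 2)) * f r ∂γ (Fin k) :=
          lintegral_const_add_stdGaussian c hf
      _ = ∫⁻ r, ∫⁻ ρ, ENNReal.ofReal (lik Q b (vecCons r ρ)) * F (vecCons r ρ)
            ∂Measure.pi (fun _ => γ (Fin k)) ∂γ (Fin k) := by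
          refine lintegral_congr fun r => ?_
          simp only [f, ih (hQ.tail r) (hcons r)]
          rw [← lintegral_const_mul' _ _ ENNReal.ofReal_ne_top]
          simp only [lik_vecCons, ← hc, ENNReal.ofReal_mul (Real.exp_pos _).le, mul_assoc]
      _ = _ := (lintegral_pi_vecCons _ ((measurable_lik hQ b).ennreal_ofReal.mul hF)).symm

lemma transcriptLaw_eq_withDensity {Q : QueryMaps N k t} (hQ : Q.Valid) (b : Fin N → ℝ) :
    transcriptLaw Q b
      = (Measure.pi fun _ => γ (Fin k)).withDensity fun ρ => ENNReal.ofReal (lik Q b ρ) := by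
  refine Measure.ext_of_lintegral _ fun F hF => ?_
  rw [lintegral_transcriptLaw_eq_lintegral_lik hQ b hF,
    lintegral_withDensity_eq_lintegral_mul _ (measurable_lik hQ b).ennreal_ofReal hF]
  rfl

end TranscriptLaw

end QueryMaps

lemma sum_measure_le_of_card_le {X W : Type*} [MeasurableSpace X] [Fintype W] (P : Measure X)
    [IsProbabilityMeasure P] {E : W → Set X} (hE : ∀ w, MeasurableSet (E w)) {C : ℝ}
    (hcard : ∀ x, ((Finset.univ.filter fun w => x ∈ E w).card : ℝ) ≤ C) :
    ∑ w, P (E w) ≤ ENNReal.ofReal C := by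
  simp only [← fun w => lintegral_indicator_one (μ := P) (hE w)]
  rw [← lintegral_finsetSum _ fun w _ => measurable_one.indicator (hE w)]
  have hpoint (x : X) : ∑ w, (E w).indicator (1 : X → ℝ≥0∞) x ≤ ENNReal.ofReal C := by
    have hcount : ∑ w, (E w).indicator (1 : X → ℝ≥0∞) x
        = ((Finset.univ.filter fun w => x ∈ E w).card : ℝ≥0∞) := by
      simp [Set.indicator_apply]
    rw [hcount, ← ENNReal.ofReal_natCast]
    exact ENNReal.ofReal_le_ofReal (hcard x)
  exact (lintegral_mono hpoint).trans_eq (by simp)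

/-- `s ^ 2 * m j` is a bound for the energy of the plant `s u vᵀ` captured in the first `j` rounds:
the increment is what a round captures of a nearly independent random sign tensor, outside an event
of probability of order `exp (-L)`. -/
structure IsEnergyBudget (n k : ℕ) (s L : ℝ) (m : ℕ → ℝ) : Prop where
  zero_nonneg : 0 ≤ m 0
  add_le_succ : ∀ j, m j + (8 * n * s ^ 2 * m j + 4 * k + 16 * n * L) ≤ m (j + 1)

lemma isEnergyBudget_geometric {n k : ℕ} (hnk : n ≤ k) {L : ℝ} (hL : 1 ≤ L) (s : ℝ) :
    IsEnergyBudget n k s L fun j => 20 * k * L * (2 + 8 * (n * s ^ 2)) ^ j where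
  zero_nonneg := by positivity
  add_le_succ j := by
    have hnk' : (n : ℝ) ≤ k := by exact_mod_cast hnk
    have hfactor : 1 ≤ (2 + 8 * (n * s ^ 2)) ^ j :=
      one_le_pow₀ (by linarith [show 0 ≤ n * s ^ 2 by positivity])
    have hnoise : 4 * (k : ℝ) + 16 * n * L ≤ 20 * k * L := by nlinarith
    have hpow : 20 * k * L ≤ 20 * k * L * (2 + 8 * (n * s ^ 2)) ^ j :=
      le_mul_of_one_le_right (by positivity) hfactor
    rw [pow_succ (2 + 8 * (n * s ^ 2))]
    linarith

namespace QueryMaps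

variable {N n k t : ℕ}

/-- Doubling the signal turns the square of a likelihood ratio into a likelihood ratio again, up to
the exponential of the energy; this is what gives access to second moments. -/
lemma lik_sq (Q : QueryMaps N k t) (b : Fin N → ℝ) (ρ : Fin t → Fin k → ℝ) :
    lik Q b ρ ^ 2 = lik Q ((2 : ℝ) • b) ρ * Real.exp (energy Q b ρ) := by
  rw [lik, lik, ← Real.exp_add, ← Real.exp_nat_mul, energy, ← Finset.sum_add_distrib,
    Finset.mul_sum]
  congr 1
  refine Finset.sum_congr rfl fun j _ => ?_
  simp only [mulVec_smul, dotProduct_smul, sqNorm_smul, smul_eq_mul]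
  push_cast
  ring

lemma lik_le_of_energy_le {Q : QueryMaps N k t} {b : Fin N → ℝ} {ρ : Fin t → Fin k → ℝ} {m K : ℝ}
    (hK : 0 < K) (hm : energy Q b ρ ≤ m) :
    lik Q b ρ ≤ K + K⁻¹ * Real.exp m * lik Q ((2 : ℝ) • b) ρ := by
  have hsq : lik Q b ρ ^ 2 ≤ lik Q ((2 : ℝ) • b) ρ * Real.exp m := by
    rw [lik_sq]
    exact mul_le_mul_of_nonneg_left (Real.exp_le_exp.mpr hm) (Real.exp_pos _).le
  have hamgm : lik Q b ρ ≤ K + K⁻¹ * lik Q b ρ ^ 2 := by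
    rw [← sub_nonneg]
    have : K + K⁻¹ * lik Q b ρ ^ 2 - lik Q b ρ
        = K⁻¹ * ((lik Q b ρ - K / 2) ^ 2 + 3 / 4 * K ^ 2) := by
      field_simp
      ring
    rw [this]
    positivity
  calc lik Q b ρ ≤ K + K⁻¹ * lik Q b ρ ^ 2 := hamgm
    _ ≤ K + K⁻¹ * (lik Q ((2 : ℝ) • b) ρ * Real.exp m) := by gcongr
    _ = K + K⁻¹ * Real.exp m * lik Q ((2 : ℝ) • b) ρ := by ring

lemma lintegral_lik {Q : QueryMaps N k t} (hQ : Q.Valid) (b : Fin N → ℝ) :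
    ∫⁻ ρ, ENNReal.ofReal (lik Q b ρ) ∂Measure.pi (fun _ => γ (Fin k)) = 1 := by
  have := isProbabilityMeasure_transcriptLaw hQ b
  rw [← setLIntegral_univ, ← withDensity_apply _ MeasurableSet.univ,
    ← transcriptLaw_eq_withDensity hQ, measure_univ]

lemma transcriptLaw_inter_energy_le {Q : QueryMaps N k t} (hQ : Q.Valid) (b : Fin N → ℝ)
    {E : Set (Fin t → Fin k → ℝ)} (hE : MeasurableSet E) (m : ℝ) {K : ℝ} (hK : 0 < K) :
    transcriptLaw Q b (E ∩ {ρ | energy Q b ρ ≤ m})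
      ≤ ENNReal.ofReal K * Measure.pi (fun _ => γ (Fin k)) E
        + ENNReal.ofReal (K⁻¹ * Real.exp m) := by
  have henergy : MeasurableSet {ρ | energy Q b ρ ≤ m} :=
    measurableSet_le (measurable_energy hQ b) measurable_const
  rw [transcriptLaw_eq_withDensity hQ, withDensity_apply _ (hE.inter henergy)]
  calc ∫⁻ ρ in E ∩ {ρ | energy Q b ρ ≤ m}, ENNReal.ofReal (lik Q b ρ)
        ∂Measure.pi (fun _ => γ (Fin k))
      ≤ ∫⁻ ρ in E ∩ {ρ | energy Q b ρ ≤ m}, (ENNReal.ofReal K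
          + ENNReal.ofReal (K⁻¹ * Real.exp m) * ENNReal.ofReal (lik Q ((2 : ℝ) • b) ρ))
          ∂Measure.pi (fun _ => γ (Fin k)) := by
        refine setLIntegral_mono' (hE.inter henergy) fun ρ hρ => ?_
        have hlik : 0 ≤ lik Q ((2 : ℝ) • b) ρ := (Real.exp_pos _).le
        rw [← ENNReal.ofReal_mul (by positivity), ← ENNReal.ofReal_add hK.le (by positivity)]
        exact ENNReal.ofReal_le_ofReal (lik_le_of_energy_le hK hρ.2)
    _ ≤ ENNReal.ofReal K * Measure.pi (fun _ => γ (Fin k)) E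
        + ENNReal.ofReal (K⁻¹ * Real.exp m) := by
        rw [lintegral_add_left measurable_const, setLIntegral_const]
        gcongr
        · exact Set.inter_subset_left
        · refine (setLIntegral_le_lintegral _ _).trans_eq ?_
          rw [lintegral_const_mul' _ _ ENNReal.ofReal_ne_top, lintegral_lik hQ, mul_one]

/-- A Fano-type bound. The likelihood is truncated at the level `K = exp ((m + D) / 2)`, and the
excess is controlled by its second moment. -/
lemma sum_transcriptLaw_inter_energy_le {W : Type*} [Fintype W] {Q : QueryMaps N k t}
    (hQ : Q.Valid) (b : W → Fin N → ℝ) {E : W → Set (Fin t → Fin k → ℝ)}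
    (hE : ∀ w, MeasurableSet (E w)) (m : ℝ) {D : ℝ}
    (hcard : ∀ ρ, ((Finset.univ.filter fun w => ρ ∈ E w).card : ℝ)
      ≤ Fintype.card W * Real.exp (-D)) :
    ∑ w, transcriptLaw Q (b w) (E w ∩ {ρ | energy Q (b w) ρ ≤ m})
      ≤ ENNReal.ofReal (Fintype.card W * (2 * Real.exp ((m - D) / 2))) := by
  set K := Real.exp ((m + D) / 2) with hK
  have hK_pos : 0 < K := Real.exp_pos _
  have hbelow : K * Real.exp (-D) = Real.exp ((m - D) / 2) := by
    rw [hK, ← Real.exp_add]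
    ring_nf
  have habove : K⁻¹ * Real.exp m = Real.exp ((m - D) / 2) := by
    rw [hK, ← Real.exp_neg, ← Real.exp_add]
    ring_nf
  calc ∑ w, transcriptLaw Q (b w) (E w ∩ {ρ | energy Q (b w) ρ ≤ m})
      ≤ ∑ w, (ENNReal.ofReal K * Measure.pi (fun _ => γ (Fin k)) (E w)
          + ENNReal.ofReal (K⁻¹ * Real.exp m)) :=
        Finset.sum_le_sum fun w _ => transcriptLaw_inter_energy_le hQ (b w) (hE w) m hK_pos
    _ = ENNReal.ofReal K * ∑ w, Measure.pi (fun _ => γ (Fin k)) (E w)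
          + Fintype.card W * ENNReal.ofReal (K⁻¹ * Real.exp m) := by
        rw [Finset.sum_add_distrib, Finset.mul_sum, Finset.sum_const, Finset.card_univ,
          nsmul_eq_mul]
    _ ≤ ENNReal.ofReal K * ENNReal.ofReal (Fintype.card W * Real.exp (-D))
          + Fintype.card W * ENNReal.ofReal (K⁻¹ * Real.exp m) := by
        gcongr
        exact sum_measure_le_of_card_le _ hE hcard
    _ = ENNReal.ofReal (Fintype.card W * (2 * Real.exp ((m - D) / 2))) := by
        rw [← ENNReal.ofReal_natCast, ← ENNReal.ofReal_mul hK_pos.le,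
          ← ENNReal.ofReal_mul (by positivity), ← ENNReal.ofReal_add (by positivity)
          (by positivity), habove, ← hbelow]
        ring_nf

lemma transcriptLaw_lt_energy_le {Q : QueryMaps N k (t + 1)} (hQ : Q.Valid) (b : Fin N → ℝ)
    {x y z : ℝ} (hz : x + y ≤ z) :
    transcriptLaw Q b {ρ | z < energy Q b ρ}
      ≤ transcriptLaw (trunc Q) b {ρ | x < energy (trunc Q) b ρ}
        + transcriptLaw (trunc Q) b ({ρ | y ≤ sqNorm (Q (Fin.last t) ρ *ᵥ b)}
          ∩ {ρ | energy (trunc Q) b ρ ≤ x}) := by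
  have hcast : Measurable fun ρ : Fin (t + 1) → Fin k → ℝ => ρ ∘ Fin.castSucc := by fun_prop
  refine le_trans ?_ (measure_union_le _ _)
  rw [← map_castSucc_transcriptLaw hQ]
  refine le_trans (measure_mono fun ρ hρ => ?_) (Measure.le_map_apply hcast.aemeasurable _)
  rw [Set.mem_ofPred_eq, energy_succ] at hρ
  rcases lt_or_ge x (energy (trunc Q) b (ρ ∘ Fin.castSucc)) with hx | hx
  · exact Or.inl hx
  · exact Or.inr ⟨show y ≤ _ by linarith, hx⟩

/-- As long as the captured energy of the plant is small, the transcript hardly depends on the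
plant, and so the next queries are nearly independent of it. -/
lemma sum_transcriptLaw_lt_energy_le (hn : 0 < n) {s L : ℝ} (hs : 0 < s) {m : ℕ → ℝ}
    (hm : IsEnergyBudget n k s L m) {Q : QueryMaps (n * n) k t} (hQ : Q.Valid) :
    ∑ w : SignPair n, transcriptLaw Q (s • signTensor w)
        {ρ | s ^ 2 * m t < energy Q (s • signTensor w) ρ}
      ≤ ENNReal.ofReal (Fintype.card (SignPair n) * (t * (2 * Real.exp (-L)))) := by
  induction t with
  | zero =>
    have hzero : 0 ≤ s ^ 2 * m 0 := mul_nonneg (sq_nonneg s) hm.zero_nonneg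
    simp [energy, hzero.not_gt]
  | succ t ih =>
    have hs2 : 0 < s ^ 2 := by positivity
    set x := 8 * n * s ^ 2 * m t + 4 * k + 16 * n * L with hx
    set E : SignPair n → Set (Fin t → Fin k → ℝ) := fun w =>
      {ρ | s ^ 2 * x ≤ sqNorm (Q (Fin.last t) ρ *ᵥ (s • signTensor w))} with hE
    have hbudget : s ^ 2 * m t + s ^ 2 * x ≤ s ^ 2 * m (t + 1) := by
      rw [← mul_add]
      exact mul_le_mul_of_nonneg_left (hm.add_le_succ t) (sq_nonneg s)
    have hEm (w : SignPair n) : MeasurableSet (E w) :=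
      measurableSet_le measurable_const
        (measurable_sqNorm.comp (measurable_mulVec (hQ.1 (Fin.last t)) measurable_const))
    have hcard (ρ : Fin t → Fin k → ℝ) : ((Finset.univ.filter fun w => ρ ∈ E w).card : ℝ)
        ≤ Fintype.card (SignPair n) * Real.exp (-(x / (8 * n) - k / (2 * n))) := by
      simp only [hE, mulVec_smul, sqNorm_smul, Set.mem_ofPred_eq, mul_le_mul_iff_right₀ hs2]
      simpa using card_le_of_le_sqNorm_mulVec_signTensor hn (hQ.2.1 (Fin.last t) ρ)
        (s := Finset.univ.filter fun w => x ≤ sqNorm (Q (Fin.last t) ρ *ᵥ signTensor w))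
        fun w hw => (Finset.mem_filter.mp hw).2
    have hnew := sum_transcriptLaw_inter_energy_le hQ.trunc (fun w => s • signTensor w) hEm
      (s ^ 2 * m t) hcard
    have hexp : (s ^ 2 * m t - (x / (8 * n) - k / (2 * n))) / 2 = -L := by
      rw [hx]
      field_simp
      ring
    rw [hexp] at hnew
    refine (Finset.sum_le_sum fun w _ => transcriptLaw_lt_energy_le hQ _ hbudget).trans ?_
    rw [Finset.sum_add_distrib]
    refine (add_le_add (ih hQ.trunc) hnew).trans_eq ?_
    rw [← ENNReal.ofReal_add (by positivity) (by positivity)]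
    push_cast
    ring_nf

lemma sum_transcriptLaw_lowRankBall_le (hn : 0 < n) {r : ℕ} {s η L : ℝ} (hs : 0 < s)
    (hη : 2 * η ≤ s * n) {m : ℕ → ℝ} (hm : IsEnergyBudget n k s L m) {Q : QueryMaps (n * n) k t}
    (hQ : Q.Valid) {f : (Fin t → Fin k → ℝ) → Matrix (Fin n) (Fin n) ℝ}
    (hf : ∀ i j, Measurable fun ρ => f ρ i j) :
    ∑ w : SignPair n, transcriptLaw Q (s • signTensor w) (f ⁻¹' lowRankBall r (signPlant s w) η)
      ≤ ENNReal.ofReal (Fintype.card (SignPair n) * (t * (2 * Real.exp (-L))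
        + 2 * Real.exp ((s ^ 2 * m t - (3 * n / 16 - r / 2)) / 2))) := by
  have hescape := sum_transcriptLaw_lt_energy_le hn hs hm hQ
  have hfano := sum_transcriptLaw_inter_energy_le hQ (fun w => s • signTensor w)
    (fun w => measurableSet_preimage_lowRankBall hf r (signPlant s w) η) (s ^ 2 * m t)
    fun ρ => card_le_of_mem_lowRankBall_signPlant hs hη fun w hw => (Finset.mem_filter.mp hw).2
  rw [mul_add, ENNReal.ofReal_add (by positivity) (by positivity)]
  refine le_trans ?_ (add_le_add hescape hfano)
  rw [← Finset.sum_add_distrib]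
  refine Finset.sum_le_sum fun w _ => (measure_mono fun ρ hρ => ?_).trans (measure_union_le _ _)
  exact (lt_or_ge (s ^ 2 * m t) (energy Q (s • signTensor w) ρ)).imp id fun hle => ⟨hρ, hle⟩

end QueryMaps

/-- The randomized algorithm with query maps `Q` and output map `out`, whose seed has law `μ`, is a
`2`-approximation in Ky-Fan `p` norm for rank-`r` approximation: on every input it succeeds with
probability at least `99 / 100` over the seed. -/
structure SolvesLRA {Ω : Type*} [MeasurableSpace Ω] (μ : Measure Ω) {n k t : ℕ} (r p : ℕ)
    (Q : Ω → QueryMaps (n * n) k t)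
    (out : Ω → (Fin t → Fin k → ℝ) → Matrix (Fin n) (Fin n) ℝ) : Prop where
  valid : ∀ ω, (Q ω).Valid
  measurable_query : ∀ (j : Fin t) (i : Fin k) (l : Fin (n * n)),
    Measurable fun x : Ω × (Fin (j : ℕ) → Fin k → ℝ) => Q x.1 j x.2 i l
  measurable_out : ∀ i j : Fin n, Measurable fun x : Ω × (Fin t → Fin k → ℝ) => out x.1 x.2 i j
  le_measure : ∀ A : Matrix (Fin n) (Fin n) ℝ, (99 / 100 : ℝ≥0∞) ≤
    μ {ω | (out ω ((Q ω).resp (_root_.vec n A))).rank ≤ r ∧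
      kyFanNorm p (A - out ω ((Q ω).resp (_root_.vec n A)))
        ≤ 2 * sInf {c | ∃ X : Matrix (Fin n) (Fin n) ℝ, X.rank ≤ r ∧ c = kyFanNorm p (A - X)}}

/-- The growth factor `2 + 8 n s ^ 2` of the energy budget for the plant scale
`s = 6 p √(40 n log n) / n`. -/
def growthFactor (n p : ℕ) : ℝ := 2 + 11520 * p ^ 2 * Real.log n

namespace SolvesLRA

variable {Ω : Type*} [MeasurableSpace Ω] {μ : Measure Ω} {n k t r p : ℕ}
  {Q : Ω → QueryMaps (n * n) k t} {out : Ω → (Fin t → Fin k → ℝ) → Matrix (Fin n) (Fin n) ℝ}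

lemma le_measure_lowRankBall (h : SolvesLRA μ r p Q out) (hp : 1 ≤ p)
    {A P : Matrix (Fin n) (Fin n) ℝ} (hP : P.rank ≤ r) {τ : ℝ} (hτ : specNorm (A - P) ≤ τ) :
    99 / 100 ≤ μ {ω | out ω ((Q ω).resp (_root_.vec n A)) ∈ lowRankBall r P (3 * p * τ)} :=
  (h.le_measure A).trans <| measure_mono fun _ hω =>
    ⟨hω.1, specNorm_sub_le_of_kyFanNorm_sub_le hp hP hτ hω.2⟩

lemma le_measure_eq (h : SolvesLRA μ r p Q out) (hp : 1 ≤ p) {A : Matrix (Fin n) (Fin n) ℝ}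
    (hA : A.rank ≤ r) : 99 / 100 ≤ μ {ω | out ω ((Q ω).resp (_root_.vec n A)) = A} := by
  have hself : specNorm (A - A) ≤ 0 := (specNorm_eq_zero.mpr (sub_self A)).le
  refine (h.le_measure_lowRankBall hp hA hself).trans (measure_mono fun ω hω => ?_)
  have hle : specNorm (A - _) ≤ 0 := hω.2.trans_eq (mul_zero _)
  exact (sub_eq_zero.mp (specNorm_eq_zero.mp (hle.antisymm (specNorm_nonneg _)))).symm

/-- Without any measurement the output ignores the input, so it cannot reproduce two distinct
matrices of rank at most one. -/
lemma rounds_pos [IsProbabilityMeasure μ] (h : SolvesLRA μ r p Q out) (hn : 0 < n) (hr : 1 ≤ r)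
    (hp : 1 ≤ p) : 0 < t := by
  rcases Nat.eq_zero_or_pos t with rfl | ht
  · set i : Fin n := ⟨0, hn⟩
    have hentry {A : Matrix (Fin n) (Fin n) ℝ} (hA : A.rank ≤ 1) :
        99 / 100 ≤ μ {ω | out ω Fin.elim0 i i = A i i} := by
      refine (h.le_measure_eq hp (hA.trans hr)).trans (measure_mono fun ω hω => ?_)
      rw [Set.mem_ofPred_eq, Subsingleton.elim (QueryMaps.resp _ _) Fin.elim0] at hω
      exact congrFun (congrFun hω i) i
    have hmeas : Measurable fun ω => out ω Fin.elim0 i i :=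
      (h.measurable_out i i).comp measurable_prodMk_right
    have hzero := hentry (rank_zero.trans_le zero_le_one)
    have hone := hentry (rank_signPlant_le 1 (fun _ => true, fun _ => true))
    have hdisj : Disjoint {ω | out ω Fin.elim0 i i = (0 : Matrix (Fin n) (Fin n) ℝ) i i}
        {ω | out ω Fin.elim0 i i = signPlant 1 (fun _ => true, fun _ => true) i i} :=
      Set.disjoint_left.mpr fun ω h₀ h₁ => by
        simpa [signPlant, vecMulVec_apply, sgn] using h₀.symm.trans h₁
    have htotal := (add_le_add hzero hone).trans
      ((measure_union hdisj (hmeas (measurableSet_singleton _))).symm.le.trans prob_le_one)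
    rw [← ENNReal.toReal_le_toReal (by finiteness) (by finiteness),
      ENNReal.toReal_add (by finiteness) (by finiteness)] at htotal
    norm_num at htotal
  · exact ht

lemma measurable_resp_add (h : SolvesLRA μ r p Q out) (b : Fin (n * n) → ℝ) :
    Measurable fun x : Ω × (Fin (n * n) → ℝ) => (Q x.1).resp (b + x.2) :=
  (QueryMaps.measurable_resp_uncurry h.measurable_query).comp
    (measurable_fst.prodMk (measurable_snd.const_add b))

lemma measurableSet_lowRankBall (h : SolvesLRA μ r p Q out) (P : Matrix (Fin n) (Fin n) ℝ) (η : ℝ)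
    (b : Fin (n * n) → ℝ) :
    MeasurableSet {x : Ω × (Fin (n * n) → ℝ) |
      out x.1 ((Q x.1).resp (b + x.2)) ∈ lowRankBall r P η} :=
  measurableSet_preimage_lowRankBall (fun i j => (h.measurable_out i j).comp
    (measurable_fst.prodMk (h.measurable_resp_add b))) r P η

lemma le_prod_lowRankBall [SFinite μ] (h : SolvesLRA μ r p Q out) (hn : 16 ≤ n) (hp : 1 ≤ p)
    {P : Matrix (Fin n) (Fin n) ℝ} (hP : P.rank ≤ r) :
    99 / 100 * (9 / 10) ≤ μ.prod (γ (Fin (n * n)))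
      {x | out x.1 ((Q x.1).resp (_root_.vec n P + x.2))
        ∈ lowRankBall r P (3 * p * √(40 * n * Real.log n))} := by
  have hmeas := h.measurableSet_lowRankBall P (3 * p * √(40 * n * Real.log n)) (_root_.vec n P)
  rw [Measure.prod_apply_symm hmeas]
  refine le_trans ?_ (mul_meas_ge_le_lintegral (measurable_measure_prodMk_right hmeas) (99 / 100))
  gcongr
  refine (nine_tenths_le_measure_specNorm_unvec_le hn).trans (measure_mono fun g hg => ?_)
  have hvec : _root_.vec n (P + unvec g) = _root_.vec n P + g := by
    conv_rhs => rw [← vec_unvec g]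
    rfl
  have hnoise : specNorm (P + unvec g - P) ≤ √(40 * n * Real.log n) := by
    rwa [add_sub_cancel_left]
  have := h.le_measure_lowRankBall hp hP hnoise
  rwa [hvec] at this

lemma sum_prod_lowRankBall_le [IsProbabilityMeasure μ] (h : SolvesLRA μ r p Q out) (hn : 0 < n)
    {s η L : ℝ} (hs : 0 < s) (hη : 2 * η ≤ s * n) {m : ℕ → ℝ} (hm : IsEnergyBudget n k s L m) :
    ∑ w : SignPair n, μ.prod (γ (Fin (n * n)))
        {x | out x.1 ((Q x.1).resp (s • signTensor w + x.2)) ∈ lowRankBall r (signPlant s w) η}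
      ≤ ENNReal.ofReal (Fintype.card (SignPair n) * (t * (2 * Real.exp (-L))
        + 2 * Real.exp ((s ^ 2 * m t - (3 * n / 16 - r / 2)) / 2))) := by
  have hmeas (w : SignPair n) := h.measurableSet_lowRankBall (signPlant s w) η (s • signTensor w)
  simp only [fun w => Measure.prod_apply (μ := μ) (ν := γ (Fin (n * n))) (hmeas w)]
  rw [← lintegral_finsetSum _ fun w _ => measurable_measure_prodMk_left (hmeas w)]
  refine (lintegral_mono fun ω => ?_).trans_eq
    ((lintegral_const _).trans (by rw [measure_univ, mul_one]))
  have hout (i j : Fin n) : Measurable fun ρ => out ω ρ i j :=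
    (h.measurable_out i j).comp measurable_prodMk_left
  refine le_trans (Finset.sum_le_sum fun w _ => ?_)
    (QueryMaps.sum_transcriptLaw_lowRankBall_le hn hs hη hm (h.valid ω) hout)
  exact Measure.le_map_apply (QueryMaps.measurable_resp_add (h.valid ω) _).aemeasurable _

lemma le_of_isEnergyBudget [IsProbabilityMeasure μ] (h : SolvesLRA μ r p Q out) (hn : 16 ≤ n)
    (hr : 1 ≤ r) (hp : 1 ≤ p) {s L : ℝ} (hs : 0 < s)
    (hscale : 6 * p * √(40 * n * Real.log n) ≤ s * n) {m : ℕ → ℝ}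
    (hm : IsEnergyBudget n k s L m) :
    891 / 1000 ≤ t * (2 * Real.exp (-L))
      + 2 * Real.exp ((s ^ 2 * m t - (3 * n / 16 - r / 2)) / 2) := by
  set δ := t * (2 * Real.exp (-L)) + 2 * Real.exp ((s ^ 2 * m t - (3 * n / 16 - r / 2)) / 2)
  have hcard : (0 : ℝ) < Fintype.card (SignPair n) := by exact_mod_cast Fintype.card_pos
  have hprob : (99 / 100 * (9 / 10) : ℝ≥0∞) = ENNReal.ofReal (891 / 1000) := by
    rw [← ENNReal.toReal_eq_toReal_iff' (by finiteness) (by finiteness),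
      ENNReal.toReal_ofReal (by norm_num)]
    norm_num
  have hlower := Finset.sum_le_sum fun (w : SignPair n) (_ : w ∈ Finset.univ) =>
    h.le_prod_lowRankBall hn hp ((rank_signPlant_le s w).trans hr)
  simp only [vec_signPlant] at hlower
  have hupper := hlower.trans (h.sum_prod_lowRankBall_le (by omega) hs (by linarith) hm)
  rw [Finset.sum_const, Finset.card_univ, nsmul_eq_mul, hprob, ← ENNReal.ofReal_natCast,
    ← ENNReal.ofReal_mul hcard.le, ENNReal.ofReal_le_ofReal_iff (by positivity)] at hupper
  exact le_of_mul_le_mul_left hupper hcard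

end SolvesLRA

lemma three_le_log {x : ℝ} (hx : 27 ≤ x) : 3 ≤ Real.log x := by
  rw [Real.le_log_iff_exp_le (by linarith), ← Real.exp_one_rpow, Real.rpow_ofNat]
  exact (pow_le_pow_left₀ (Real.exp_pos 1).le Real.exp_one_lt_three.le 3).trans (by linarith)

lemma one_le_log_log {x : ℝ} (hx : 27 ≤ x) : 1 ≤ Real.log (Real.log x) :=
  one_le_log (three_le_log hx)

lemma one_le_growthFactor (n p : ℕ) : 1 ≤ growthFactor n p := by
  have hmul : 0 ≤ 11520 * (p : ℝ) ^ 2 * Real.log n :=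
    mul_nonneg (by positivity) (Real.log_natCast_nonneg n)
  rw [growthFactor]
  linarith

lemma log_growthFactor_le {n p : ℕ} (hn : 27 ≤ n) (hp : 1 ≤ p) :
    Real.log (growthFactor n p) ≤ 12 * (Real.log p + Real.log (Real.log n)) := by
  have hn' : (27 : ℝ) ≤ n := by exact_mod_cast hn
  have hp' : (1 : ℝ) ≤ p := by exact_mod_cast hp
  have hlog : 3 ≤ Real.log n := three_le_log hn'
  have hloglog : 1 ≤ Real.log (Real.log n) := one_le_log_log hn'
  have hlogp : 0 ≤ Real.log p := Real.log_nonneg hp'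
  have hconst : Real.log 11522 ≤ 10 := by
    rw [Real.log_le_iff_le_exp (by norm_num), ← Real.exp_one_rpow, Real.rpow_ofNat]
    exact le_trans (by norm_num) (pow_le_pow_left₀ (by norm_num) Real.exp_one_gt_d9.le 10)
  have hle : growthFactor n p ≤ 11522 * (p ^ 2 * Real.log n) := by
    have : 1 ≤ (p : ℝ) ^ 2 * Real.log n :=
      one_le_mul_of_one_le_of_one_le (one_le_pow₀ hp') (by linarith)
    rw [growthFactor]
    linarith
  calc Real.log (growthFactor n p)
      ≤ Real.log (11522 * (p ^ 2 * Real.log n)) :=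
        Real.log_le_log (zero_lt_one.trans_le (one_le_growthFactor n p)) hle
    _ = Real.log 11522 + (2 * Real.log p + Real.log (Real.log n)) := by
        rw [Real.log_mul (by norm_num) (by positivity),
          Real.log_mul (by positivity) (by positivity), Real.log_pow, Nat.cast_ofNat]
    _ ≤ 12 * (Real.log p + Real.log (Real.log n)) := by linarith

lemma log_div_le_of_lt_growthFactor_pow {n k t p : ℕ} (hn : 27 ≤ n) (hp : 1 ≤ p) (hk : 0 < k)
    (ht : 0 < t) (hlt : (n : ℝ) ^ 2 < 80 * Real.log n * growthFactor n p ^ (t + 1) * k) :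
    Real.log ((n : ℝ) ^ 2 / k) ≤ 30 * t * (Real.log p + Real.log (Real.log n)) := by
  have hn' : (27 : ℝ) ≤ n := by exact_mod_cast hn
  have hk' : (0 : ℝ) < k := by exact_mod_cast hk
  have ht' : (1 : ℝ) ≤ t := by exact_mod_cast ht
  have hlog : 3 ≤ Real.log n := three_le_log hn'
  have hloglog : 1 ≤ Real.log (Real.log n) := one_le_log_log hn'
  have hlogp : 0 ≤ Real.log p := Real.log_natCast_nonneg p
  have hgrowth : 0 < growthFactor n p := zero_lt_one.trans_le (one_le_growthFactor n p)
  have hconst : Real.log 80 ≤ 5 := by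
    rw [Real.log_le_iff_le_exp (by norm_num), ← Real.exp_one_rpow, Real.rpow_ofNat]
    exact le_trans (by norm_num) (pow_le_pow_left₀ (by norm_num) Real.exp_one_gt_d9.le 5)
  set D := Real.log p + Real.log (Real.log n)
  calc Real.log ((n : ℝ) ^ 2 / k)
      ≤ Real.log (80 * Real.log n * growthFactor n p ^ (t + 1)) :=
        Real.log_le_log (by positivity) ((div_le_iff₀ hk').mpr hlt.le)
    _ = Real.log 80 + Real.log (Real.log n) + (t + 1) * Real.log (growthFactor n p) := by
        rw [Real.log_mul (by positivity) (by positivity),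
          Real.log_mul (by norm_num) (by positivity), Real.log_pow, Nat.cast_succ]
    _ ≤ 5 + D + (t + 1) * (12 * D) := by
        gcongr
        · linarith
        · exact log_growthFactor_le hn hp
    _ ≤ 30 * t * D := by nlinarith

lemma log_sq_div_le {x y : ℝ} (hx : 0 < x) (hxy : x ≤ y) : Real.log (x ^ 2 / y) ≤ x :=
  have hy : 0 < y := hx.trans_le hxy
  calc Real.log (x ^ 2 / y) ≤ Real.log x :=
        Real.log_le_log (by positivity) ((div_le_iff₀ hy).mpr (by nlinarith))
    _ ≤ x := Real.log_le_self hx.le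

/-- `8 n s ^ 2` is at most the growth factor, so one more round of growth pays for the factor
`s ^ 2`. -/
lemma sq_mul_energyBudget_le {n k L s : ℝ} {t : ℕ} (hn : 0 < n) (hk : 0 ≤ k) (hL : 0 ≤ L)
    (hle : 80 * L * (2 + 8 * (n * s ^ 2)) ^ (t + 1) * k ≤ n ^ 2) :
    s ^ 2 * (20 * k * L * (2 + 8 * (n * s ^ 2)) ^ t) ≤ n / 32 := by
  set b := 2 + 8 * (n * s ^ 2)
  have : 0 ≤ b := by positivity
  have hpow : 8 * (n * s ^ 2) * b ^ t ≤ b ^ (t + 1) := by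
    rw [pow_succ' b t]
    gcongr
    linarith
  have hmul : n * (s ^ 2 * (20 * k * L * b ^ t)) ≤ n * (n / 32) := by
    linarith [mul_le_mul_of_nonneg_right hpow (show 0 ≤ 80 * L * k by positivity)]
  exact le_of_mul_le_mul_left hmul hn

namespace SolvesLRA

variable {Ω : Type*} [MeasurableSpace Ω] {μ : Measure Ω} [IsProbabilityMeasure μ]
  {n k t r p : ℕ} {Q : Ω → QueryMaps (n * n) k t}
  {out : Ω → (Fin t → Fin k → ℝ) → Matrix (Fin n) (Fin n) ℝ}

lemma sq_lt_growthFactor_pow (h : SolvesLRA μ r p Q out) (hn : 256 ≤ n) (hr : 1 ≤ r) (hp : 1 ≤ p)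
    (hk : n * r ≤ k) (ht : 8 * t ≤ n) :
    (n : ℝ) ^ 2 < 80 * Real.log n * growthFactor n p ^ (t + 1) * k := by
  by_contra! hle
  have hn' : (256 : ℝ) ≤ n := by exact_mod_cast hn
  have hn_pos : (0 : ℝ) < n := by linarith
  have : (1 : ℝ) ≤ p := by exact_mod_cast hp
  have hk' : (n : ℝ) * r ≤ k := by exact_mod_cast hk
  have ht' : 8 * (t : ℝ) ≤ n := by exact_mod_cast ht
  have hlog : 1 ≤ Real.log n := one_le_log (by linarith)
  have hr' : 80 * (r : ℝ) ≤ n := by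
    have hgrowth : 1 ≤ Real.log n * growthFactor n p ^ (t + 1) :=
      one_le_mul_of_one_le_of_one_le hlog (one_le_pow₀ (one_le_growthFactor n p))
    nlinarith
  set s : ℝ := 6 * p * √(40 * n * Real.log n) / n with hs
  have hs_pos : 0 < s := by positivity
  have hs_sq : growthFactor n p = 2 + 8 * (n * s ^ 2) := by
    rw [growthFactor, hs, div_pow, mul_pow, Real.sq_sqrt (by positivity)]
    field_simp
    ring
  rw [hs_sq] at hle
  have hbound := h.le_of_isEnergyBudget (by omega) hr hp hs_pos (div_mul_cancel₀ _ hn_pos.ne').ge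
    (isEnergyBudget_geometric ((Nat.le_mul_of_pos_right n hr).trans hk) hlog s)
  have henergy := sq_mul_energyBudget_le hn_pos k.cast_nonneg (zero_le_one.trans hlog) hle
  have hescape : t * (2 * Real.exp (-Real.log n)) ≤ 1 / 4 := by
    rw [Real.exp_neg, Real.exp_log hn_pos, ← div_eq_mul_inv, ← mul_div_assoc, div_le_iff₀ hn_pos]
    linarith
  have hclose : Real.exp (-((n : ℝ) / 32)) ≤ 1 / 8 := by
    rw [Real.exp_neg, one_div]
    exact inv_anti₀ (by norm_num) (by linarith [Real.add_one_le_exp ((n : ℝ) / 32)])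
  have hexp := Real.exp_le_exp.mpr (show (s ^ 2 * (20 * k * Real.log n
    * (2 + 8 * (n * s ^ 2)) ^ t) - (3 * n / 16 - r / 2)) / 2 ≤ -((n : ℝ) / 32) by linarith)
  linarith

lemma log_div_le (h : SolvesLRA μ r p Q out) (hn : 256 ≤ n) (hr : 1 ≤ r) (hp : 1 ≤ p)
    (hk : n * r ≤ k) :
    Real.log ((n : ℝ) ^ 2 / k) ≤ 30 * t * (Real.log p + Real.log (Real.log n)) := by
  have hnk : n ≤ k := (Nat.le_mul_of_pos_right n hr).trans hk
  have ht : 0 < t := h.rounds_pos (by omega) hr hp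
  rcases le_or_gt (8 * t) n with hfew | hmany
  · exact log_div_le_of_lt_growthFactor_pow (by omega) hp (by omega) ht
      (h.sq_lt_growthFactor_pow hn hr hp hk hfew)
  · have hn' : (256 : ℝ) ≤ n := by exact_mod_cast hn
    have hloglog : 1 ≤ Real.log (Real.log n) := one_le_log_log (by linarith)
    have hlogp : 0 ≤ Real.log p := Real.log_natCast_nonneg p
    calc Real.log ((n : ℝ) ^ 2 / k) ≤ n := log_sq_div_le (by linarith) (by exact_mod_cast hnk)
      _ ≤ 30 * t * 1 := by
          have : (n : ℝ) ≤ 8 * t := by exact_mod_cast hmany.le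
          linarith
      _ ≤ 30 * t * (Real.log p + Real.log (Real.log n)) := by
          gcongr
          linarith

end SolvesLRA

/-- Round lower bound for 2-approximate Ky-Fan-`p` norm low-rank approximation. -/
theorem kyfan_LRA_round_lower_bound :
    ∃ (c : ℝ) (n₀ : ℕ), 0 < c ∧
      ∀ (n r k t p : ℕ), n₀ ≤ n → 1 ≤ r → 1 ≤ p → p ≤ n → n * r ≤ k → k ≤ n ^ 2 →
      ∀ (Ω : Type) [MeasurableSpace Ω] (μ : Measure Ω) [IsProbabilityMeasure μ]
        (Qf : Ω → QueryMaps (n * n) k t)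
        (out : Ω → (Fin t → Fin k → ℝ) → Matrix (Fin n) (Fin n) ℝ),
        (∀ ω, (Qf ω).Valid) →
        (∀ (j : Fin t) (i : Fin k) (l : Fin (n * n)),
            Measurable fun p : Ω × (Fin (j : ℕ) → Fin k → ℝ) => Qf p.1 j p.2 i l) →
        (∀ i j : Fin n,
            Measurable fun p : Ω × (Fin t → Fin k → ℝ) => out p.1 p.2 i j) →
        (∀ A : Matrix (Fin n) (Fin n) ℝ,
            (99 / 100 : ℝ≥0∞) ≤
              μ {ω | (out ω (QueryMaps.resp (Qf ω) (vec n A))).rank ≤ r ∧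
                    kyFanNorm p (A - out ω (QueryMaps.resp (Qf ω) (vec n A)))
                      ≤ 2 * sInf {c' | ∃ X : Matrix (Fin n) (Fin n) ℝ,
                          X.rank ≤ r ∧ c' = kyFanNorm p (A - X)}}) →
        c * (Real.log ((n : ℝ) ^ 2 / k) /
            (Real.log p + Real.log (Real.log n))) ≤ (t : ℝ) := by
  refine ⟨1 / 30, 256, by norm_num, ?_⟩
  intro n r k t p hn hr hp _ hk _ Ω _ μ _ Qf out hQ hQm hout hsucc
  have hsolves : SolvesLRA μ r p Qf out := ⟨hQ, hQm, hout, hsucc⟩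
  have hloglog : 1 ≤ Real.log (Real.log n) := by
    have hn' : (256 : ℝ) ≤ n := by exact_mod_cast hn
    exact one_le_log_log (by linarith)
  have hlogp : 0 ≤ Real.log p := Real.log_natCast_nonneg p
  rw [← mul_div_assoc, div_le_iff₀ (by linarith)]
  linarith [hsolves.log_div_le hn hr hp hk]

end
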